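/- arXiv:2509.17326 — 2 statements merged into one kernel-verified Lean document; each statement's English description precedes it below -/
import Mathlib

section
/- Let K ⊂ ℝ^n (n ≥ 3) be a convex body, H a hyperplane, and p an interior point of K not lying on any hyperplane of symmetry of K parallel to H. Suppose p is a Larman point of K but not a revolution point, and for every hyperplane Π through p the section Π ∩ K has an (n−2)-plane of symmetry parallel to H. Then K is an ellipsoid of revolution with an axis of revolution perpendicular to H. -/
noncomputable section

open Metric Set MeasureTheory

/-- Euclidean n-space. -/
abbrev Euc (n : ℕ) := EuclideanSpace ℝ (Fin n)

/-- A convex body: compact, convex, with nonempty interior. -/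
def IsConvexBody {n : ℕ} (K : Set (Euc n)) : Prop :=
  IsCompact K ∧ Convex ℝ K ∧ (interior K).Nonempty

/-- `f` is the (orthogonal) reflection of the space with fixed-point set the affine
subspace `A`: an involutive isometry whose fixed points are exactly `A`. -/
def IsReflectionFix {n : ℕ} (f : Euc n → Euc n) (A : AffineSubspace ℝ (Euc n)) : Prop :=
  Isometry f ∧ f ∘ f = id ∧ {x | f x = x} = (A : Set (Euc n))

/-- `A` is a plane of symmetry of the set `K`. -/
def IsSymmetryPlane {n : ℕ} (K : Set (Euc n)) (A : AffineSubspace ℝ (Euc n)) : Prop :=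
  ∃ f : Euc n → Euc n, IsReflectionFix f A ∧ f '' K = K

/-- `L` is a plane of symmetry of the set `s` within the flat `P`:
some involutive isometry of the ambient space preserves `P`, has exactly `L` as
fixed-point set inside `P`, and maps `s` onto itself. -/
def IsSymmPlaneOfIn {n : ℕ} (s : Set (Euc n)) (P L : AffineSubspace ℝ (Euc n)) : Prop :=
  L ≤ P ∧ ∃ f : Euc n → Euc n, Isometry f ∧ f ∘ f = id ∧
    f '' (P : Set (Euc n)) = (P : Set (Euc n)) ∧
    {x ∈ (P : Set (Euc n)) | f x = x} = (L : Set (Euc n)) ∧ f '' s = s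

/-- `L` is a plane of symmetry of the section `P ∩ K` within the flat `P`. -/
def IsSectionSymmPlane {n : ℕ} (K : Set (Euc n)) (P L : AffineSubspace ℝ (Euc n)) : Prop :=
  IsSymmPlaneOfIn ((P : Set (Euc n)) ∩ K) P L

/-- A hyperplane: a nonempty affine subspace whose direction has dimension `n - 1`. -/
def IsHyperplane {n : ℕ} (A : AffineSubspace ℝ (Euc n)) : Prop :=
  (A : Set (Euc n)).Nonempty ∧ Module.finrank ℝ A.direction = n - 1

/-- A rotation about the affine subspace `L`: an affine isometry fixing `L`
pointwise whose linear part has determinant one (orientation preserving). -/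
def IsRotationAbout {n : ℕ} (f : Euc n ≃ᵃⁱ[ℝ] Euc n) (L : AffineSubspace ℝ (Euc n)) : Prop :=
  (∀ x ∈ L, f x = x) ∧
    LinearMap.det (f.linearIsometryEquiv.toLinearEquiv : Euc n →ₗ[ℝ] Euc n) = 1

/-- A body of revolution with axis the line `L`. -/
def IsRevolutionBody {n : ℕ} (K : Set (Euc n)) (L : AffineSubspace ℝ (Euc n)) : Prop :=
  IsConvexBody K ∧ (L : Set (Euc n)).Nonempty ∧ Module.finrank ℝ L.direction = 1 ∧
    ∀ f : Euc n ≃ᵃⁱ[ℝ] Euc n, IsRotationAbout f L → f '' K = K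

/-- A `k`-dimensional ellipsoid: affine image of a `k`-dimensional unit ball. -/
def IsEllipsoidOfDim {n : ℕ} (k : ℕ) (s : Set (Euc n)) : Prop :=
  ∃ (T : Euc n ≃ᵃ[ℝ] Euc n) (V : Submodule ℝ (Euc n)), Module.finrank ℝ V = k ∧
    s = T '' (closedBall 0 1 ∩ (V : Set (Euc n)))

/-- The shadow boundary of `K` with respect to the direction submodule `D`:
the union of the touching sets of all supporting flats of `K` with direction `D`. -/
def shadowBoundary {n : ℕ} (K : Set (Euc n)) (D : Submodule ℝ (Euc n)) : Set (Euc n) :=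
  ⋃ l ∈ {l : AffineSubspace ℝ (Euc n) | l.direction = D ∧
      ((l : Set (Euc n)) ∩ K).Nonempty ∧ (l : Set (Euc n)) ∩ interior K = ∅},
    ((l : Set (Euc n)) ∩ K)

/-- `p` is a Larman point of `K`: every hyperplane section of `K` through `p` has
an `(n-2)`-plane of symmetry. -/
def IsLarmanPoint {n : ℕ} (K : Set (Euc n)) (p : Euc n) : Prop :=
  p ∈ interior K ∧ ∀ P : AffineSubspace ℝ (Euc n), IsHyperplane P → p ∈ P →
    ∃ L : AffineSubspace ℝ (Euc n), Module.finrank ℝ L.direction = n - 2 ∧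
      IsSectionSymmPlane K P L

/-- `p` is a revolution point of `K`: every hyperplane section of `K` through `p` has
an `(n-2)`-plane of symmetry containing `p`. -/
def IsRevolutionPoint {n : ℕ} (K : Set (Euc n)) (p : Euc n) : Prop :=
  p ∈ interior K ∧ ∀ P : AffineSubspace ℝ (Euc n), IsHyperplane P → p ∈ P →
    ∃ L : AffineSubspace ℝ (Euc n), Module.finrank ℝ L.direction = n - 2 ∧ p ∈ L ∧
      IsSectionSymmPlane K P L

section helpers

open Filter Topology Asymptotics
open scoped RealInnerProductSpace

/-- The positively homogeneous function with one-sided slopes `dp`, `dm`. -/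
def hatD (dp dm t : ℝ) : ℝ := dp * max t 0 + dm * min t 0

lemma hatD_cont (dp dm : ℝ) : Continuous (hatD dp dm) := by
  unfold hatD; fun_prop

lemma hatD_hom (dp dm : ℝ) {c : ℝ} (hc : 0 < c) (t : ℝ) : hatD dp dm (c * t) = c * hatD dp dm t := by
  unfold hatD
  rcases le_total 0 t with h | h
  · have : 0 ≤ c * t := by positivity
    rw [max_eq_left h, min_eq_right h, max_eq_left this, min_eq_right this]; ring
  · have : c * t ≤ 0 := mul_nonpos_of_nonneg_of_nonpos hc.le h
    rw [max_eq_right h, min_eq_left h, max_eq_right this, min_eq_left this]; ring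

lemma hatD_add_neg (dp dm t : ℝ) : hatD dp dm t + hatD dp dm (-t) = (dp - dm) * |t| := by
  unfold hatD
  rcases le_total 0 t with h | h
  · have h' : -t ≤ 0 := by linarith
    rw [max_eq_left h, min_eq_right h, max_eq_right h', min_eq_left h', abs_of_nonneg h]; ring
  · have h' : 0 ≤ -t := by linarith
    rw [max_eq_right h, min_eq_left h, max_eq_left h', min_eq_right h', abs_of_nonpos h]; ring

lemma quot_tendsto {ι : Type*} {F : Filter ι} {τ a : ι → ℝ} {a0 dp dm : ℝ} {G : ℝ → ℝ}
    (hτ : Tendsto τ F (𝓝[>] 0)) (ha : Tendsto a F (𝓝 a0))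
    (hp : HasDerivWithinAt G dp (Ici 0) 0) (hm : HasDerivWithinAt G dm (Iic 0) 0) :
    Tendsto (fun i => (G (τ i * a i) - G 0) / τ i) F (𝓝 (hatD dp dm a0)) := by
  have ho : (fun s => G s - G 0 - hatD dp dm s) =o[𝓝 0] (fun s : ℝ => s) := by
    have h1 := hasDerivWithinAt_iff_isLittleO.1 hp
    have h2 := hasDerivWithinAt_iff_isLittleO.1 hm
    have : 𝓝 (0:ℝ) = 𝓝[≤] 0 ⊔ 𝓝[≥] 0 := (nhdsLE_sup_nhdsGE 0).symm
    rw [this]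
    refine IsLittleO.sup ?_ ?_
    · refine (h2.congr' ?_ ?_)
      · filter_upwards [self_mem_nhdsWithin] with s hs
        have hs : s ≤ 0 := hs
        simp [hatD, max_eq_right hs, min_eq_left hs, mul_comm]
      · exact Eventually.of_forall fun s => by simp
    · refine (h1.congr' ?_ ?_)
      · filter_upwards [self_mem_nhdsWithin] with s hs
        have hs : 0 ≤ s := hs
        simp [hatD, max_eq_left hs, min_eq_right hs, mul_comm]
      · exact Eventually.of_forall fun s => by simp
  have hτ0 : Tendsto τ F (𝓝 0) := hτ.mono_right nhdsWithin_le_nhds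
  have hpos : ∀ᶠ i in F, 0 < τ i := hτ.eventually self_mem_nhdsWithin
  have hs : Tendsto (fun i => τ i * a i) F (𝓝 0) := by simpa using hτ0.mul ha
  have h3 := ho.comp_tendsto hs
  have hO : (fun i => τ i * a i) =O[F] τ := by
    simpa using (isBigO_refl τ F).mul (ha.isBigO_one ℝ)
  have h4 : Tendsto (fun i => (G (τ i * a i) - G 0 - hatD dp dm (τ i * a i)) / τ i) F (𝓝 0) :=
    (h3.trans_isBigO hO).tendsto_div_nhds_zero
  have h5 : Tendsto (fun i => hatD dp dm (a i)) F (𝓝 (hatD dp dm a0)) :=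
    ((hatD_cont dp dm).tendsto a0).comp ha
  have h6 := h4.add h5
  rw [zero_add] at h6
  refine h6.congr' ?_
  filter_upwards [hpos] with i hi
  rw [hatD_hom _ _ hi]
  field_simp
  ring

section
variable {G C k k' : ℝ → ℝ} {T l d dp dm : ℝ}

lemma quot_right (hk : Tendsto k (𝓝[≠] 0) (𝓝 T)) (hk' : Tendsto k' (𝓝[≠] 0) (𝓝 (-T)))
    (heq : ∀ᶠ t in 𝓝[≠] (0:ℝ), G (t * (k t + l)) - G (t * (k' t + l)) = C t * (k t - k' t))
    (hp : HasDerivWithinAt G dp (Ici 0) 0) (hm : HasDerivWithinAt G dm (Iic 0) 0) :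
    Tendsto (fun t => C t / t * (k t - k' t)) (𝓝[>] 0)
      (𝓝 (hatD dp dm (T + l) - hatD dp dm (-T + l))) := by
  have hle : 𝓝[>] (0:ℝ) ≤ 𝓝[≠] 0 := nhdsWithin_mono _ (fun x hx => ne_of_gt hx)
  have h1 := quot_tendsto (tendsto_id (x := 𝓝[>] (0:ℝ))) ((hk.mono_left hle).add_const l) hp hm
  have h2 := quot_tendsto (tendsto_id (x := 𝓝[>] (0:ℝ))) ((hk'.mono_left hle).add_const l) hp hm
  refine (h1.sub h2).congr' ?_
  filter_upwards [hle heq] with t ht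
  simp only [id]
  rw [← sub_div, sub_sub_sub_cancel_right, ht]; ring

lemma quot_left (hk : Tendsto k (𝓝[≠] 0) (𝓝 T)) (hk' : Tendsto k' (𝓝[≠] 0) (𝓝 (-T)))
    (heq : ∀ᶠ t in 𝓝[≠] (0:ℝ), G (t * (k t + l)) - G (t * (k' t + l)) = C t * (k t - k' t))
    (hp : HasDerivWithinAt G dp (Ici 0) 0) (hm : HasDerivWithinAt G dm (Iic 0) 0) :
    Tendsto (fun t => C t / t * (k t - k' t)) (𝓝[<] 0)
      (𝓝 (-(hatD dp dm (-(T + l)) - hatD dp dm (-(-T + l))))) := by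
  have hle : 𝓝[<] (0:ℝ) ≤ 𝓝[≠] 0 := nhdsWithin_mono _ (fun x hx => ne_of_lt hx)
  have hneg : Tendsto (fun t : ℝ => -t) (𝓝[<] 0) (𝓝[>] 0) := by
    simpa using tendsto_neg_nhdsLT (a := (0:ℝ))
  have h1 := quot_tendsto hneg ((hk.mono_left hle).add_const l).neg hp hm
  have h2 := quot_tendsto hneg ((hk'.mono_left hle).add_const l).neg hp hm
  refine (h1.sub h2).neg.congr' ?_
  filter_upwards [hle heq] with t ht
  simp only [neg_mul_neg]
  rw [← sub_div, sub_sub_sub_cancel_right, ht]; ring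

lemma two_tendsto (hk : Tendsto k (𝓝[≠] 0) (𝓝 T)) (hk' : Tendsto k' (𝓝[≠] 0) (𝓝 (-T))) :
    Tendsto (fun t => k t - k' t) (𝓝[≠] 0) (𝓝 (2 * T)) := by
  convert hk.sub hk' using 2; ring

lemma lemA (hT : 0 < T) (hk : Tendsto k (𝓝[≠] 0) (𝓝 T)) (hk' : Tendsto k' (𝓝[≠] 0) (𝓝 (-T)))
    (heq : ∀ᶠ t in 𝓝[≠] (0:ℝ), G (t * (k t + l)) - G (t * (k' t + l)) = C t * (k t - k' t))
    (hd : HasDerivAt G d 0) : Tendsto (fun t => C t / t) (𝓝[≠] 0) (𝓝 d) := by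
  have h1 := quot_right hk hk' heq hd.hasDerivWithinAt hd.hasDerivWithinAt
  have h2 := quot_left hk hk' heq hd.hasDerivWithinAt hd.hasDerivWithinAt
  have hD : ∀ t, hatD d d t = d * t := by
    intro t; unfold hatD; rw [← mul_add, max_add_min]; simp
  simp only [hD] at h1 h2
  have h3 : Tendsto (fun t => C t / t * (k t - k' t)) (𝓝[≠] 0) (𝓝 (2 * T * d)) := by
    rw [← nhdsLT_sup_nhdsGT]
    refine Tendsto.sup ?_ ?_
    · convert h2 using 2; ring
    · convert h1 using 2; ring
  have h4 := two_tendsto hk hk'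
  have h5 := h3.div h4 (by positivity)
  have : 2 * T * d / (2 * T) = d := by field_simp
  rw [this] at h5
  refine h5.congr' ?_
  filter_upwards [h4.eventually_ne (by positivity : 2 * T ≠ 0)] with t ht
  simp only [Pi.div_apply]
  field_simp

lemma lemB (hT : 0 < T) (hl : l ≠ 0)
    (hk : Tendsto k (𝓝[≠] 0) (𝓝 T)) (hk' : Tendsto k' (𝓝[≠] 0) (𝓝 (-T)))
    (heq : ∀ᶠ t in 𝓝[≠] (0:ℝ), G (t * (k t + l)) - G (t * (k' t + l)) = C t * (k t - k' t))
    (hp : HasDerivWithinAt G dp (Ici 0) 0) (hm : HasDerivWithinAt G dm (Iic 0) 0)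
    (hC : Tendsto (fun t => C t / t) (𝓝[≠] 0) (𝓝 d)) : HasDerivAt G d 0 := by
  have h1 := quot_right hk hk' heq hp hm
  have h2 := quot_left hk hk' heq hp hm
  have h3 := hC.mul (two_tendsto hk hk')
  have hle : 𝓝[<] (0:ℝ) ≤ 𝓝[≠] 0 := nhdsWithin_mono _ (fun x hx => ne_of_lt hx)
  have hle' : 𝓝[>] (0:ℝ) ≤ 𝓝[≠] 0 := nhdsWithin_mono _ (fun x hx => ne_of_gt hx)
  have e1 := tendsto_nhds_unique h1 (h3.mono_left hle')
  have e2 := tendsto_nhds_unique h2 (h3.mono_left hle)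
  have a1 := hatD_add_neg dp dm (T + l)
  have a2 := hatD_add_neg dp dm (-T + l)
  have a3 : (dp - dm) * (|T + l| - |-T + l|) = 0 := by linarith
  have a4 : |T + l| - |-T + l| ≠ 0 := by
    intro h
    have : |T + l| = |-T + l| := by linarith
    rcases abs_eq_abs.1 this with h | h
    · linarith
    · exact hl (by linarith)
  have a5 : dp = dm := by
    rcases mul_eq_zero.1 a3 with h | h
    · linarith
    · exact absurd h a4
  subst a5
  have hd : HasDerivAt G dp 0 := by
    have := hp.union hm
    rwa [Ici_union_Iic, hasDerivWithinAt_univ] at this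
  have := tendsto_nhds_unique (lemA hT hk hk' heq hd) hC
  rwa [this] at hd
end

/-- Normalised configuration: `K` lives in `V × ℝ`, symmetric in the height variable, the special
point is `(0, -l)`, and `C` encodes the centres of symmetry of the sections. -/
structure Cfg {V : Type*} [NormedAddCommGroup V] [InnerProductSpace ℝ V]
    (K : Set (V × ℝ)) (l : ℝ) (C : V → ℝ → ℝ) : Prop where
  cpt : IsCompact K
  cvx : Convex ℝ K
  zero : ((0 : V), (0 : ℝ)) ∈ interior K
  sym : ∀ y k, (y, k) ∈ K → (y, -k) ∈ K
  l0 : l ≠ 0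
  refl : ∀ v : V, ‖v‖ = 1 → ∀ t x k, ⟪x, v⟫ = 0 → (x + (k + l) • (t • v), k) ∈ K →
    (x + ((C v t - k) + l) • (t • v), C v t - k) ∈ K

section geom
variable {V : Type*} [NormedAddCommGroup V] [InnerProductSpace ℝ V]
variable {K : Set (V × ℝ)} {l : ℝ} {C : V → ℝ → ℝ}

/-- Interior of the projection. -/
def Udom (K : Set (V × ℝ)) : Set V := {y | (y, (0 : ℝ)) ∈ interior K}

/-- Half-height function. -/
def ph (K : Set (V × ℝ)) (y : V) : ℝ := sSup {k | (y, k) ∈ K}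

/-- Chord parameters. -/
def chd (K : Set (V × ℝ)) (l : ℝ) (x w : V) : Set ℝ := {k | (x + (k + l) • w, k) ∈ K}

lemma isOpen_Udom : IsOpen (Udom K) := by
  have : Continuous (fun y : V => (y, (0:ℝ))) := by fun_prop
  exact isOpen_interior.preimage this

namespace Cfg

lemma convex_Udom (h : Cfg K l C) : Convex ℝ (Udom K) := by
  intro x hx y hy a b ha hb hab
  have := h.cvx.interior hx hy ha hb hab
  simpa [Udom] using this

lemma zero_mem (h : Cfg K l C) : (0 : V) ∈ Udom K := h.zero

lemma chd_compact (h : Cfg K l C) (x w : V) : IsCompact (chd K l x w) := by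
  have hc : Continuous (fun k : ℝ => (x + (k + l) • w, k)) := by fun_prop
  have h1 : IsClosed (chd K l x w) := h.cpt.isClosed.preimage hc
  have h2 : IsCompact (Prod.snd '' K) := h.cpt.image continuous_snd
  exact h2.of_isClosed_subset h1 (fun k hk => ⟨_, hk, rfl⟩)

lemma chd_convex (h : Cfg K l C) (x w : V) : Convex ℝ (chd K l x w) := by
  intro k1 h1 k2 h2 a b ha hb hab
  have h3 := h.cvx h1 h2 ha hb hab
  have : a • (x + (k1 + l) • w, k1) + b • (x + (k2 + l) • w, k2)
      = (x + ((a • k1 + b • k2) + l) • w, a • k1 + b • k2) := by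
    ext
    · simp only [Prod.smul_mk, Prod.mk_add_mk]
      have : a = 1 - b := by linarith
      subst this
      simp only [smul_eq_mul]; module
    · simp
  rw [this] at h3
  exact h3

lemma fib_compact (h : Cfg K l C) (y : V) : IsCompact {k | (y, k) ∈ K} := by
  simpa [chd] using h.chd_compact y 0

lemma fib_convex (h : Cfg K l C) (y : V) : Convex ℝ {k | (y, k) ∈ K} := by
  simpa [chd] using h.chd_convex y 0

lemma ph_mem (h : Cfg K l C) {y : V} {k : ℝ} (hy : (y, k) ∈ K) : (y, ph K y) ∈ K :=
  (h.fib_compact y).sSup_mem ⟨k, hy⟩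

lemma le_ph (h : Cfg K l C) {y : V} {k : ℝ} (hy : (y, k) ∈ K) : k ≤ ph K y :=
  le_csSup (h.fib_compact y).bddAbove hy

lemma abs_le_ph (h : Cfg K l C) {y : V} {k : ℝ} (hy : (y, k) ∈ K) : |k| ≤ ph K y :=
  abs_le'.2 ⟨h.le_ph hy, h.le_ph (h.sym _ _ hy)⟩

lemma mem_of_abs (h : Cfg K l C) {y : V} {k k0 : ℝ} (hy : (y, k0) ∈ K) (hk : |k| ≤ ph K y) : (y, k) ∈ K := by
  have h1 := h.ph_mem hy
  have h2 := h.sym _ _ h1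
  exact (h.fib_convex y).ordConnected.out h2 h1 (abs_le.1 hk)

lemma mem_U (h : Cfg K l C) {y : V} (hy : y ∈ Udom K) : (y, (0:ℝ)) ∈ K := interior_subset hy

lemma ph_pos (h : Cfg K l C) {y : V} (hy : y ∈ Udom K) : 0 < ph K y := by
  have hc : Continuous (fun k : ℝ => (y, k)) := by fun_prop
  have ho : IsOpen {k : ℝ | (y, k) ∈ interior K} := isOpen_interior.preimage hc
  obtain ⟨k, hk, hk0⟩ := Filter.nonempty_of_mem (Filter.inter_mem
    (mem_nhdsWithin_of_mem_nhds (ho.mem_nhds hy))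
    (self_mem_nhdsWithin : Ioi (0:ℝ) ∈ 𝓝[>] (0:ℝ)))
  exact lt_of_lt_of_le hk0 (h.le_ph (interior_subset hk))

lemma mem_int (h : Cfg K l C) {y : V} {k : ℝ} (hy : y ∈ Udom K) (hk : |k| < ph K y) : (y, k) ∈ interior K := by
  have hp := h.ph_pos hy
  have key : ∀ q : ℝ, (y, q) ∈ K → ∀ b : ℝ, 0 ≤ b → b < 1 → (y, b * q) ∈ interior K := by
    intro q hq b hb hb1
    have := h.cvx.combo_interior_self_mem_interior hy hq (a := 1 - b) (b := b) (by linarith) hb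
      (by ring)
    convert this using 1
    ext
    · simp only [Prod.smul_mk, Prod.mk_add_mk]; module
    · simp
  have h1 := h.ph_mem (h.mem_U hy)
  have hb1 : |k| / ph K y < 1 := by rwa [div_lt_one hp]
  rcases le_total 0 k with h0 | h0
  · have := key _ h1 (|k| / ph K y) (by positivity) hb1
    rwa [div_mul_cancel₀ _ hp.ne', abs_of_nonneg h0] at this
  · have := key _ (h.sym _ _ h1) (|k| / ph K y) (by positivity) hb1
    rwa [mul_neg, div_mul_cancel₀ _ hp.ne', abs_of_nonpos h0, neg_neg] at this

lemma concave (h : Cfg K l C) : ConcaveOn ℝ (Udom K) (ph K) := by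
  refine ⟨h.convex_Udom, ?_⟩
  intro x hx y hy a b ha hb hab
  have h3 := h.cvx (h.ph_mem (h.mem_U hx)) (h.ph_mem (h.mem_U hy)) ha hb hab
  exact h.le_ph h3

lemma ends (h : Cfg K l C) {x : V} (hx : x ∈ Udom K) {ε : ℝ} (hε : 0 < ε) : ∀ᶠ w in 𝓝 (0 : V),
    |sSup (chd K l x w) - ph K x| < ε ∧ |sInf (chd K l x w) + ph K x| < ε ∧
    x + (sSup (chd K l x w) + l) • w ∈ Udom K ∧
    ph K (x + (sSup (chd K l x w) + l) • w) = sSup (chd K l x w) ∧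
    x + (sInf (chd K l x w) + l) • w ∈ Udom K ∧
    ph K (x + (sInf (chd K l x w) + l) • w) = - sInf (chd K l x w) ∧
    (chd K l x w).Nonempty := by
  set T := ph K x with hT
  have hTp : 0 < T := h.ph_pos hx
  obtain ⟨e, he, heε, heT⟩ : ∃ e, 0 < e ∧ e < ε ∧ e < T := by
    refine ⟨min ε T / 2, by positivity, ?_, ?_⟩
    · have := min_le_left ε T; have : 0 < min ε T := by positivity
      linarith
    · have := min_le_right ε T; have : 0 < min ε T := by positivity
      linarith
  have inn : ∀ a : ℝ, |a| < T → ∀ᶠ w in 𝓝 (0 : V), (x + (a + l) • w, a) ∈ K := by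
    intro a ha
    have hc : Continuous (fun w : V => (x + (a + l) • w, a)) := by fun_prop
    have : ∀ᶠ w in 𝓝 (0 : V), (x + (a + l) • w, a) ∈ interior K := by
      apply hc.continuousAt.eventually_mem
      apply isOpen_interior.mem_nhds
      simpa using h.mem_int hx ha
    filter_upwards [this] with w hw using interior_subset hw
  have out : ∀ a : ℝ, T < |a| → ∀ᶠ w in 𝓝 (0 : V), (x + (a + l) • w, a) ∉ K := by
    intro a ha
    have hc : Continuous (fun w : V => (x + (a + l) • w, a)) := by fun_prop
    have : ∀ᶠ w in 𝓝 (0 : V), (x + (a + l) • w, a) ∈ Kᶜ := by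
      apply hc.continuousAt.eventually_mem
      apply h.cpt.isClosed.isOpen_compl.mem_nhds
      intro hmem
      have := h.abs_le_ph (by simpa using hmem)
      linarith
    exact this
  obtain ⟨ρ, hρ, hball⟩ := Metric.isOpen_iff.1 isOpen_Udom x hx
  have hM : 0 < T + e + |l| + 1 := by positivity
  have small : ∀ᶠ w in 𝓝 (0 : V), ‖w‖ < ρ / (T + e + |l| + 1) := by
    have := Metric.ball_mem_nhds (0 : V) (show 0 < ρ / (T + e + |l| + 1) by positivity)
    filter_upwards [this] with w hw using by simpa using hw
  filter_upwards [inn (T - e) (by rw [abs_of_pos] <;> linarith),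
    inn (-(T - e)) (by rw [abs_neg, abs_of_pos] <;> linarith),
    out (T + e) (by rw [abs_of_pos] <;> linarith),
    out (-(T + e)) (by rw [abs_neg, abs_of_pos] <;> linarith), small] with w i1 i2 o1 o2 hs
  have hne : (chd K l x w).Nonempty := ⟨_, i1⟩
  have hcp := h.chd_compact x w
  have hoc := (h.chd_convex x w).ordConnected
  have s1 := hcp.sSup_mem hne
  have s2 := hcp.sInf_mem hne
  have b1 : T - e ≤ sSup (chd K l x w) := le_csSup hcp.bddAbove i1
  have b2 : sInf (chd K l x w) ≤ -(T - e) := csInf_le hcp.bddBelow i2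
  have c1 : sSup (chd K l x w) < T + e := by
    by_contra hcon
    exact o1 (hoc.out i1 s1 ⟨by linarith, by linarith⟩)
  have c2 : -(T + e) < sInf (chd K l x w) := by
    by_contra hcon
    exact o2 (hoc.out s2 i2 ⟨by linarith, by linarith⟩)
  have inU : ∀ k : ℝ, |k| < T + e → x + (k + l) • w ∈ Udom K := by
    intro k hk
    apply hball
    rw [mem_ball, dist_eq_norm, add_sub_cancel_left, norm_smul, Real.norm_eq_abs]
    have h1 : |k + l| ≤ T + e + |l| + 1 := by linarith [abs_add_le k l]
    calc |k + l| * ‖w‖ ≤ (T + e + |l| + 1) * ‖w‖ := by gcongr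
      _ < (T + e + |l| + 1) * (ρ / (T + e + |l| + 1)) := by gcongr
      _ = ρ := by field_simp
  have u1 := inU _ (abs_lt.2 ⟨by linarith, c1⟩)
  have u2 := inU _ (abs_lt.2 ⟨c2, by linarith⟩)
  have hc : Continuous (fun k : ℝ => (x + (k + l) • w, k)) := by fun_prop
  have ho : IsOpen {k : ℝ | (x + (k + l) • w, k) ∈ interior K} := isOpen_interior.preimage hc
  refine ⟨by rw [abs_lt]; constructor <;> linarith, by rw [abs_lt]; constructor <;> linarith,
    u1, ?_, u2, ?_, hne⟩
  · have le := h.le_ph s1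
    by_contra hcon
    have lt := lt_of_le_of_ne le (Ne.symm hcon)
    have hi := h.mem_int u1 (k := sSup (chd K l x w)) (by rw [abs_of_pos (by linarith)]; exact lt)
    obtain ⟨k, hk, hk0⟩ := Filter.nonempty_of_mem (Filter.inter_mem
      (mem_nhdsWithin_of_mem_nhds (ho.mem_nhds hi))
      (self_mem_nhdsWithin : Ioi (sSup (chd K l x w)) ∈ 𝓝[>] (sSup (chd K l x w))))
    exact absurd (le_csSup hcp.bddAbove (show k ∈ chd K l x w from interior_subset (s := K) hk))
      (not_le.2 hk0)
  · have le := h.le_ph (h.sym _ _ s2)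
    by_contra hcon
    have lt := lt_of_le_of_ne le (Ne.symm hcon)
    have hi := h.mem_int u2 (k := sInf (chd K l x w)) (by rw [abs_of_neg (by linarith)]; exact lt)
    obtain ⟨k, hk, hk0⟩ := Filter.nonempty_of_mem (Filter.inter_mem
      (mem_nhdsWithin_of_mem_nhds (ho.mem_nhds hi))
      (self_mem_nhdsWithin : Iio (sInf (chd K l x w)) ∈ 𝓝[<] (sInf (chd K l x w))))
    exact absurd (csInf_le hcp.bddBelow (show k ∈ chd K l x w from interior_subset (s := K) hk))
      (not_le.2 hk0)

lemma sum_ends (h : Cfg K l C) {x v : V} (hv : ‖v‖ = 1) (hxv : ⟪x, v⟫ = 0) (t : ℝ)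
    (hne : (chd K l x (t • v)).Nonempty) :
    sSup (chd K l x (t • v)) + sInf (chd K l x (t • v)) = C v t := by
  have hcp := h.chd_compact x (t • v)
  have s1 := hcp.sSup_mem hne
  have s2 := hcp.sInf_mem hne
  have r1 : C v t - sSup (chd K l x (t • v)) ∈ chd K l x (t • v) := h.refl v hv t x _ hxv s1
  have r2 : C v t - sInf (chd K l x (t • v)) ∈ chd K l x (t • v) := h.refl v hv t x _ hxv s2
  have q1 := csInf_le hcp.bddBelow r1
  have q2 := le_csSup hcp.bddAbove r2
  linarith

lemma smul_tendsto (v : V) : Tendsto (fun t : ℝ => t • v) (𝓝[≠] 0) (𝓝 0) := by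
  have : Continuous (fun t : ℝ => t • v) := by fun_prop
  have := (this.tendsto 0).mono_left (nhdsWithin_le_nhds (s := {0}ᶜ))
  simpa using this

/-- Uniform smallness of the centre function. -/
lemma C_small (h : Cfg K l C) {ε : ℝ} (hε : 0 < ε) : ∃ r > 0, ∀ v : V, ‖v‖ = 1 → ∀ t : ℝ, |t| < r → |C v t| < ε := by
  have := h.ends h.zero_mem (half_pos hε)
  obtain ⟨r, hr, H⟩ := Metric.eventually_nhds_iff.1 this
  refine ⟨r, hr, fun v hv t ht => ?_⟩
  have := H (y := t • v) (by simpa [norm_smul, hv] using ht)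
  obtain ⟨h1, h2, -, -, -, -, hne⟩ := this
  have e := h.sum_ends hv (inner_zero_left v) t hne
  rw [← e]
  rw [abs_lt] at *
  constructor <;> linarith

/-- Chord end data along a direction. -/
lemma chord_data (h : Cfg K l C) {x v : V} (hx : x ∈ Udom K) (hv : ‖v‖ = 1) (hxv : ⟪x, v⟫ = 0) :
    ∃ k k' : ℝ → ℝ, Tendsto k (𝓝[≠] 0) (𝓝 (ph K x)) ∧ Tendsto k' (𝓝[≠] 0) (𝓝 (-ph K x)) ∧
      ∀ᶠ t in 𝓝[≠] (0:ℝ), k t + k' t = C v t ∧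
        x + (t * (k t + l)) • v ∈ Udom K ∧ x + (t * (k' t + l)) • v ∈ Udom K ∧
        ph K (x + (t * (k t + l)) • v) ^ 2 - ph K (x + (t * (k' t + l)) • v) ^ 2
          = C v t * (k t - k' t) := by
  have hs := smul_tendsto v
  refine ⟨fun t => sSup (chd K l x (t • v)), fun t => sInf (chd K l x (t • v)), ?_, ?_, ?_⟩
  · rw [Metric.tendsto_nhds]
    intro ε hε
    filter_upwards [hs.eventually (h.ends hx hε)] with t ht
    rw [Real.dist_eq]; exact ht.1
  · rw [Metric.tendsto_nhds]
    intro ε hε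
    filter_upwards [hs.eventually (h.ends hx hε)] with t ht
    rw [Real.dist_eq, sub_neg_eq_add]; exact ht.2.1
  · filter_upwards [hs.eventually (h.ends hx one_pos)] with t ht
    obtain ⟨-, -, u1, p1, u2, p2, hne⟩ := ht
    have e := h.sum_ends hv hxv t hne
    have c : ∀ k : ℝ, (t * (k + l)) • v = (k + l) • t • v := by
      intro k; rw [smul_smul, mul_comm]
    simp only [c]
    refine ⟨e, u1, u2, ?_⟩
    rw [p1, p2, ← e]; ring

end Cfg
end geom

section geom2
variable {V : Type*} [NormedAddCommGroup V] [InnerProductSpace ℝ V]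
variable {K : Set (V × ℝ)} {l : ℝ} {C : V → ℝ → ℝ}

namespace Cfg

lemma line_scale {F : V → ℝ} {x u : V} {d : ℝ} (c : ℝ)
    (hF : HasDerivAt (fun s : ℝ => F (x + s • u)) d 0) :
    HasDerivAt (fun s : ℝ => F (x + s • (c • u))) (c * d) 0 := by
  have h3 : HasDerivAt (fun s : ℝ => s * c) c 0 := by
    simpa using (hasDerivAt_id (0:ℝ)).mul_const c
  have h4 := HasDerivAt.comp (h₂ := fun s : ℝ => F (x + s • u)) (h := fun s : ℝ => s * c)
    (0:ℝ) (by simpa using hF) h3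
  rw [mul_comm c d]
  refine h4.congr_of_eventuallyEq (Eventually.of_forall fun s => ?_)
  simp only [Function.comp, smul_smul]

lemma line_sides (h : Cfg K l C) {x : V} (hx : x ∈ Udom K) (v : V) :
    (∃ dp, HasDerivWithinAt (fun s : ℝ => ph K (x + s • v)) dp (Ici 0) 0) ∧
    (∃ dm, HasDerivWithinAt (fun s : ℝ => ph K (x + s • v)) dm (Iic 0) 0) := by
  have hc := h.concave.comp_affineMap (AffineMap.lineMap x (x + v) : ℝ →ᵃ[ℝ] V)
  have e : (ph K ∘ (AffineMap.lineMap x (x + v) : ℝ →ᵃ[ℝ] V)) = fun s : ℝ => ph K (x + s • v) := by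
    funext s
    simp [AffineMap.lineMap_apply, add_comm]
  rw [e] at hc
  have hn := hc.neg
  have ho : IsOpen ((AffineMap.lineMap x (x + v) : ℝ →ᵃ[ℝ] V) ⁻¹' (Udom K)) :=
    isOpen_Udom.preimage (by
      have : Continuous (fun s : ℝ => s • v + x) := by fun_prop
      refine this.congr fun s => by simp [AffineMap.lineMap_apply])
  have h0 : (0:ℝ) ∈ interior ((AffineMap.lineMap x (x + v) : ℝ →ᵃ[ℝ] V) ⁻¹' (Udom K)) := by
    rw [ho.interior_eq]; simpa using hx
  have h1 := (hn.differentiableWithinAt_Ioi_of_mem_interior h0).neg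
  have h2 := (hn.differentiableWithinAt_Iio_of_mem_interior h0).neg
  rw [neg_neg] at h1 h2
  exact ⟨⟨_, h1.hasDerivWithinAt.Ici_of_Ioi⟩, ⟨_, h2.hasDerivWithinAt.Iic_of_Iio⟩⟩

lemma limA (h : Cfg K l C) {x v : V} (hx : x ∈ Udom K) (hv : ‖v‖ = 1) (hxv : ⟪x, v⟫ = 0) {d : ℝ}
    (hd : HasDerivAt (fun s : ℝ => ph K (x + s • v) ^ 2) d 0) :
    Tendsto (fun t => C v t / t) (𝓝[≠] 0) (𝓝 d) := by
  obtain ⟨k, k', hk, hk', hev⟩ := h.chord_data hx hv hxv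
  exact lemA (G := fun s : ℝ => ph K (x + s • v) ^ 2) (h.ph_pos hx) hk hk' 
    (hev.mono fun t ht => ht.2.2.2) hd

lemma limB (h : Cfg K l C) {x v : V} (hx : x ∈ Udom K) (hv : ‖v‖ = 1) (hxv : ⟪x, v⟫ = 0) {d : ℝ}
    (hC : Tendsto (fun t => C v t / t) (𝓝[≠] 0) (𝓝 d)) :
    HasDerivAt (fun s : ℝ => ph K (x + s • v) ^ 2) d 0 := by
  obtain ⟨k, k', hk, hk', hev⟩ := h.chord_data hx hv hxv
  obtain ⟨⟨dp, hp⟩, ⟨dm, hm⟩⟩ := h.line_sides hx v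
  exact lemB (G := fun s : ℝ => ph K (x + s • v) ^ 2) (h.ph_pos hx) h.l0 hk hk'
    (hev.mono fun t ht => ht.2.2.2) (hp.pow 2) (hm.pow 2) hC

/-- Supergradient at the origin. -/
lemma supergrad (h : Cfg K l C) : ∃ L : V →L[ℝ] ℝ, ∀ y ∈ Udom K, ph K y ≤ ph K 0 + L y := by
  have hT := h.ph_pos h.zero_mem
  have hno : ((0 : V), ph K 0) ∉ interior K := by
    intro hi
    have hc : Continuous (fun k : ℝ => ((0 : V), k)) := by fun_prop
    have ho : IsOpen {k : ℝ | ((0 : V), k) ∈ interior K} := isOpen_interior.preimage hc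
    obtain ⟨k, hk, hk0⟩ := Filter.nonempty_of_mem (Filter.inter_mem
      (mem_nhdsWithin_of_mem_nhds (ho.mem_nhds hi))
      (self_mem_nhdsWithin : Ioi (ph K 0) ∈ 𝓝[>] (ph K 0)))
    have := h.le_ph (interior_subset (s := K) hk)
    exact absurd this (not_le.2 hk0)
  obtain ⟨F, hF⟩ := geometric_hahn_banach_open_point h.cvx.interior isOpen_interior hno
  set c := F (0, 1) with hc
  have dec : ∀ (y : V) (k : ℝ), F (y, k) = F (y, 0) + k * c := by
    intro y k
    have : ((y, k) : V × ℝ) = (y, 0) + k • ((0 : V), (1:ℝ)) := by ext <;> simp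
    rw [this, map_add, map_smul, smul_eq_mul]
  have F0 : F ((0 : V), (0:ℝ)) = 0 := map_zero F
  have hc0 : 0 < c := by
    have := hF _ h.zero
    rw [dec 0 (ph K 0), F0] at this
    by_contra hneg
    nlinarith
  refine ⟨-(c⁻¹ • (F.comp (ContinuousLinearMap.inl ℝ V ℝ))), fun y hy => ?_⟩
  have hle : ∀ z ∈ K, F z ≤ F (0, ph K 0) := by
    have hcl : K ⊆ closure (interior K) := by
      rw [h.cvx.closure_interior_eq_closure_of_nonempty_interior ⟨_, h.zero⟩]
      exact subset_closure
    intro z hz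
    have : closure (interior K) ⊆ {z | F z ≤ F (0, ph K 0)} := by
      apply closure_minimal
      · intro a ha; exact (hF a ha).le
      · exact isClosed_le F.continuous continuous_const
    exact this (hcl hz)
  have := hle _ (h.ph_mem (h.mem_U hy))
  rw [dec y, dec 0, F0] at this
  simp only [neg_apply, smul_apply,
    ContinuousLinearMap.comp_apply, ContinuousLinearMap.inl_apply, smul_eq_mul]
  have e : c * (c⁻¹ * F (y, 0)) = F (y, 0) := by field_simp
  nlinarith

/-- Local Lipschitz extension. -/
lemma loc_lip [FiniteDimensional ℝ V] (h : Cfg K l C) {x : V} (hx : x ∈ Udom K) :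
    ∃ (M : NNReal) (R : ℝ) (ψ : V → ℝ), 0 < R ∧ ball x R ⊆ Udom K ∧ LipschitzWith M ψ ∧
      EqOn (ph K) ψ (ball x R) := by
  obtain ⟨M, t, ht, hL⟩ := h.concave.locallyLipschitzOn isOpen_Udom hx
  rw [isOpen_Udom.nhdsWithin_eq hx] at ht
  obtain ⟨R, hR, hb⟩ := Metric.mem_nhds_iff.1 (Filter.inter_mem ht (isOpen_Udom.mem_nhds hx))
  obtain ⟨ψ, h1, h2⟩ := (hL.mono (hb.trans inter_subset_left)).extend_real
  exact ⟨M, R, ψ, hR, hb.trans inter_subset_right, h1, h2⟩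

lemma exists_orth [FiniteDimensional ℝ V] (hd : 2 ≤ Module.finrank ℝ V) (v : V) :
    ∃ w : V, ‖w‖ = 1 ∧ ⟪w, v⟫ = 0 := by
  have h1 := Submodule.finrank_add_finrank_orthogonal (ℝ ∙ v)
  have h2 : Module.finrank ℝ (ℝ ∙ v) ≤ 1 := by
    simpa using finrank_span_le_card (R := ℝ) ({v} : Set V)
  have h3 : 0 < Module.finrank ℝ (ℝ ∙ v)ᗮ := by omega
  have := Module.finrank_pos_iff.1 h3
  obtain ⟨⟨w, hw⟩, hne⟩ := exists_ne (0 : (ℝ ∙ v)ᗮ)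
  have hw0 : w ≠ 0 := fun h => hne (by ext; exact h)
  refine ⟨‖w‖⁻¹ • w, by rw [norm_smul, norm_inv, norm_norm, inv_mul_cancel₀ (norm_ne_zero_iff.2 hw0)], ?_⟩
  rw [inner_smul_left, real_inner_comm, Submodule.mem_orthogonal_singleton_iff_inner_right.1 hw, mul_zero]

/-- Differentiability of the height function at the origin. -/
lemma diff0 [FiniteDimensional ℝ V] (hd : 2 ≤ Module.finrank ℝ V) (h : Cfg K l C) :
    ∃ L : V →L[ℝ] ℝ, HasFDerivAt (ph K) L 0 := by
  obtain ⟨L, hL⟩ := h.supergrad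
  obtain ⟨M, R, ψ, hR, hU, hlip, heq⟩ := h.loc_lip h.zero_mem
  let _ : MeasurableSpace V := borel V
  have : BorelSpace V := ⟨rfl⟩
  have hdense : Dense {y | DifferentiableAt ℝ ψ y} :=
    Measure.dense_of_ae (hlip.ae_differentiableAt (μ := Measure.addHaar))
  have hev : ∀ y ∈ ball (0:V) R, ph K =ᶠ[𝓝 y] ψ := fun y hy =>
    Filter.eventuallyEq_of_mem (isOpen_ball.mem_nhds hy) heq
  have T0 := h.ph_pos h.zero_mem
  refine ⟨L, ?_⟩
  suffices hs : HasFDerivAt ψ L 0 from hs.congr_of_eventuallyEq (hev 0 (mem_ball_self hR))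
  -- good directions
  have good : ∀ y ∈ ball (0:V) R, DifferentiableAt ℝ ψ y → ∀ w : V, w ≠ 0 → ⟪y, w⟫ = 0 →
      HasLineDerivAt ℝ ψ (L w) 0 w := by
    intro y hy hdy w hw hyw
    have hyU := hU hy
    have hwn : ‖w‖ ≠ 0 := norm_ne_zero_iff.2 hw
    set v := ‖w‖⁻¹ • w with hv
    have hv1 : ‖v‖ = 1 := by rw [hv, norm_smul, norm_inv, norm_norm, inv_mul_cancel₀ hwn]
    have hyv : ⟪y, v⟫ = 0 := by rw [hv, inner_smul_right, hyw, mul_zero]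
    have hdφ : DifferentiableAt ℝ (ph K) y := hdy.congr_of_eventuallyEq (hev y hy)
    have hl : DifferentiableAt ℝ (fun s : ℝ => ph K (y + s • v) ^ 2) 0 := by
      refine DifferentiableAt.pow ?_ 2
      refine DifferentiableAt.comp (g := ph K) (f := fun s : ℝ => y + s • v) 0 ?_ (by fun_prop)
      simpa using hdφ
    have lim := h.limA hyU hv1 hyv hl.hasDerivAt
    have hB := h.limB h.zero_mem hv1 (inner_zero_left v) lim
    set d := deriv (fun s : ℝ => ph K (y + s • v) ^ 2) 0
    -- derivative of the height itself
    have hrt : HasDerivAt (fun s : ℝ => ph K (0 + s • v)) (d / (2 * ph K 0)) 0 := by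
      have h1 := hB.sqrt (by simp only [zero_smul, add_zero]; positivity)
      simp only [zero_smul, add_zero] at h1
      rw [Real.sqrt_sq T0.le] at h1
      refine h1.congr_of_eventuallyEq ?_
      have hc : Continuous (fun s : ℝ => (0:V) + s • v) := by fun_prop
      have : ∀ᶠ s : ℝ in 𝓝 0, (0:V) + s • v ∈ Udom K := by
        apply hc.continuousAt.eventually_mem
        apply isOpen_Udom.mem_nhds
        simpa using h.zero_mem
      filter_upwards [this] with s hs
      rw [Real.sqrt_sq (h.ph_pos hs).le]
    have hmaxd : d / (2 * ph K 0) = L v := by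
      have hm : IsLocalMax (fun s : ℝ => ph K (0 + s • v) - s * L v) 0 := by
        have hc : Continuous (fun s : ℝ => (0:V) + s • v) := by fun_prop
        have : ∀ᶠ s : ℝ in 𝓝 0, (0:V) + s • v ∈ Udom K := by
          apply hc.continuousAt.eventually_mem
          apply isOpen_Udom.mem_nhds
          simpa using h.zero_mem
        filter_upwards [this] with s hs
        have := hL _ hs
        simp only [zero_add, map_smul, smul_eq_mul] at this
        simp only [zero_add, zero_smul, zero_mul, sub_zero]
        linarith
      have h2 := hrt.sub ((hasDerivAt_id (0:ℝ)).mul_const (L v))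
      have := hm.hasDerivAt_eq_zero h2
      linarith
    rw [hmaxd] at hrt
    have hrw : HasDerivAt (fun s : ℝ => ph K (0 + s • w)) (L w) 0 := by
      have hwv : w = ‖w‖ • v := by rw [hv, smul_smul, mul_inv_cancel₀ hwn, one_smul]
      have h4 := line_scale ‖w‖ hrt
      rw [← smul_eq_mul, ← map_smul, ← hwv] at h4
      exact h4
    unfold HasLineDerivAt
    refine hrw.congr_of_eventuallyEq ?_
    have hc : Continuous (fun s : ℝ => (0:V) + s • w) := by fun_prop
    have : ∀ᶠ s : ℝ in 𝓝 0, (0:V) + s • w ∈ ball (0:V) R := by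
      apply hc.continuousAt.eventually_mem
      apply isOpen_ball.mem_nhds
      simpa using hR
    filter_upwards [this] with s hs
    exact (heq hs).symm
  refine hlip.hasFDerivAt_of_hasLineDerivAt_of_closure
    (s := {w | HasLineDerivAt ℝ ψ (L w) 0 w}) ?_ (fun v hv => hv)
  intro v hv
  have hv1 : ‖v‖ = 1 := by simpa using hv
  obtain ⟨e, he1, hev'⟩ := exists_orth hd v
  set y0 := (R / 2) • e with hy0
  have hy0b : y0 ∈ ball (0:V) R := by
    rw [mem_ball_zero_iff, hy0, norm_smul, he1, Real.norm_eq_abs, abs_of_pos (by positivity)]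
    linarith
  have hy0n : y0 ≠ 0 := by
    intro h0
    have : ‖y0‖ = R / 2 := by simp [hy0, norm_smul, he1, abs_of_pos hR]
    rw [h0, norm_zero] at this; linarith
  have hy0v : ⟪y0, v⟫ = 0 := by rw [hy0, inner_smul_left, hev', mul_zero]
  let Φ : V → V := fun y => v - (⟪y, v⟫ / ‖y‖ ^ 2) • y
  have hΦ : ContinuousAt Φ y0 := by
    have : ‖y0‖ ^ 2 ≠ 0 := by positivity
    apply ContinuousAt.sub continuousAt_const
    apply ContinuousAt.smul _ continuousAt_id
    refine ContinuousAt.div₀ (f := fun y : V => ⟪y, v⟫) (g := fun y : V => ‖y‖ ^ 2) ?_ ?_ this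
    · fun_prop
    · fun_prop
  have hΦ0 : Φ y0 = v := by simp [Φ, hy0v]
  rw [mem_closure_iff_nhds]
  intro t ht
  have h1 : ∀ᶠ y in 𝓝 y0, Φ y ∈ t := hΦ.eventually_mem (by rwa [hΦ0])
  have h2 : ∀ᶠ y in 𝓝 y0, Φ y ≠ 0 := hΦ.eventually_ne (by
    rw [hΦ0]; intro h0; rw [h0, norm_zero] at hv1; exact zero_ne_one hv1)
  have h3 : ∀ᶠ y in 𝓝 y0, y ∈ ball (0:V) R := isOpen_ball.mem_nhds hy0b
  have h4 : ∀ᶠ y in 𝓝 y0, y ≠ 0 := eventually_ne_nhds hy0n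
  have h5 := ((h1.and h2).and (h3.and h4))
  obtain ⟨U', hU', hUo, hUm⟩ := _root_.eventually_nhds_iff.1 h5
  obtain ⟨y, hyU', hyd⟩ := hdense.inter_open_nonempty U' hUo ⟨_, hUm⟩
  obtain ⟨⟨g1, g2⟩, g3, g4⟩ := hU' y hyU'
  refine ⟨Φ y, g1, good y g3 hyd _ g2 ?_⟩
  have : ‖y‖ ^ 2 ≠ 0 := by positivity
  simp only [Φ, inner_sub_right, inner_smul_right, real_inner_self_eq_norm_sq]
  field_simp
  ring

/-- The linear part `B`. -/
lemma exists_B [FiniteDimensional ℝ V] (hd : 2 ≤ Module.finrank ℝ V) (h : Cfg K l C) :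
    ∃ B : V →L[ℝ] ℝ, ∀ x v : V, x ∈ Udom K → ⟪x, v⟫ = 0 →
      HasDerivAt (fun s : ℝ => ph K (x + s • v) ^ 2) (B v) 0 := by
  obtain ⟨L, hL⟩ := h.diff0 hd
  refine ⟨(2 * ph K 0) • L, fun x v hx hxv => ?_⟩
  have unit : ∀ v : V, ‖v‖ = 1 → ⟪x, v⟫ = 0 →
      HasDerivAt (fun s : ℝ => ph K (x + s • v) ^ 2) (((2 * ph K 0) • L) v) 0 := by
    intro v hv1 hxv
    have h1 : HasDerivAt (fun s : ℝ => ph K (0 + s • v)) (L v) 0 := by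
      have h2 : HasDerivAt (fun s : ℝ => (0:V) + s • v) v 0 := by
        simpa using ((hasDerivAt_id (0:ℝ)).smul_const v).const_add (0:V)
      exact HasFDerivAt.comp_hasDerivAt (l := ph K) (f := fun s : ℝ => (0:V) + s • v) (0:ℝ)
        (by simpa using hL) h2
    have h2 := h1.pow 2
    have h3 := h.limA h.zero_mem hv1 (inner_zero_left v) h2
    have h4 := h.limB hx hv1 hxv h3
    convert h4 using 1
    simp
  rcases eq_or_ne v 0 with rfl | hv
  · simpa using hasDerivAt_const (0:ℝ) (ph K x ^ 2)
  have hwn : ‖v‖ ≠ 0 := norm_ne_zero_iff.2 hv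
  have h1 := unit (‖v‖⁻¹ • v) (by rw [norm_smul, norm_inv, norm_norm, inv_mul_cancel₀ hwn])
    (by rw [inner_smul_right, hxv, mul_zero])
  have h4 := line_scale (F := fun y => ph K y ^ 2) ‖v‖ h1
  rw [← smul_eq_mul, ← map_smul, smul_smul, mul_inv_cancel₀ hwn, one_smul] at h4
  exact h4
end Cfg
end geom2

section geom3
variable {V : Type*} [NormedAddCommGroup V] [InnerProductSpace ℝ V]
variable {K : Set (V × ℝ)} {l : ℝ} {C : V → ℝ → ℝ}

lemma curve_deriv {F : V → ℝ} {M : NNReal} (hF : LipschitzWith M F) {c : ℝ → V} {c' : V} {a d : ℝ}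
    (hc : HasDerivAt c c' a) (hd : HasDerivAt (fun s : ℝ => F (c a + s • c')) d 0) :
    HasDerivAt (fun s => F (c s)) d a := by
  rw [hasDerivAt_iff_isLittleO]
  have h1 := hasDerivAt_iff_isLittleO.1 hc
  have h2 := hasDerivAt_iff_isLittleO.1 hd
  have ht : Tendsto (fun s : ℝ => s - a) (𝓝 a) (𝓝 0) := by
    have : Continuous (fun s : ℝ => s - a) := by fun_prop
    simpa using this.tendsto a
  have h3 : (fun s => F (c a + (s - a) • c') - F (c a) - (s - a) • d) =o[𝓝 a]
      fun s => s - a := by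
    refine (h2.comp_tendsto ht).congr' (Eventually.of_forall fun s => ?_)
      (Eventually.of_forall fun s => ?_) <;> simp
  have h4 : (fun s => F (c s) - F (c a + (s - a) • c')) =o[𝓝 a] fun s => s - a := by
    refine IsBigO.trans_isLittleO ?_ h1
    refine IsBigO.of_bound M (Eventually.of_forall fun s => ?_)
    have := hF.dist_le_mul (c s) (c a + (s - a) • c')
    rw [Real.dist_eq, dist_eq_norm] at this
    rw [Real.norm_eq_abs, sub_sub]
    exact this
  have h5 := h4.add h3
  refine h5.congr' (Eventually.of_forall fun s => ?_) (Eventually.of_forall fun s => ?_)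
  · simp only []; ring
  · rfl

/-- The reduced squared height. -/
def fB (K : Set (V × ℝ)) (B : V →L[ℝ] ℝ) (y : V) : ℝ := ph K y ^ 2 - B y

/-- Property of the linear part. -/
def IsB (K : Set (V × ℝ)) (B : V →L[ℝ] ℝ) : Prop := ∀ x v : V, x ∈ Udom K → ⟪x, v⟫ = 0 →
      HasDerivAt (fun s : ℝ => ph K (x + s • v) ^ 2) (B v) 0

namespace Cfg
variable {B : V →L[ℝ] ℝ} [FiniteDimensional ℝ V]

lemma curve_zero (h : Cfg K l C) (hB : IsB K B) {c : ℝ → V} {c' : V} {a : ℝ}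
    (hU : c a ∈ Udom K) (hc : HasDerivAt c c' a) (ho : ⟪c a, c'⟫ = 0) :
    HasDerivAt (fun s => fB K B (c s)) 0 a := by
  obtain ⟨M, R, ψ, hR, hb, hlip, heq⟩ := h.loc_lip hU
  have hp := h.ph_pos hU
  have h0 := hB (c a) c' hU ho
  have h1 := h0.sqrt (by simp only [zero_smul, add_zero]; positivity)
  simp only [zero_smul, add_zero] at h1
  rw [Real.sqrt_sq hp.le] at h1
  have h2 : HasDerivAt (fun s : ℝ => ψ (c a + s • c')) (B c' / (2 * ph K (c a))) 0 := by
    refine h1.congr_of_eventuallyEq ?_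
    have hcc : Continuous (fun s : ℝ => c a + s • c') := by fun_prop
    have : ∀ᶠ s : ℝ in 𝓝 0, c a + s • c' ∈ ball (c a) R := by
      apply hcc.continuousAt.eventually_mem
      apply isOpen_ball.mem_nhds
      simpa using hR
    filter_upwards [this] with s hs
    rw [Real.sqrt_sq (h.ph_pos (hb hs)).le, heq hs]
  have h3 := curve_deriv hlip hc h2
  have h4 : HasDerivAt (fun s => ph K (c s)) (B c' / (2 * ph K (c a))) a := by
    refine h3.congr_of_eventuallyEq ?_
    have : ∀ᶠ s : ℝ in 𝓝 a, c s ∈ ball (c a) R :=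
      hc.continuousAt.eventually_mem (isOpen_ball.mem_nhds (mem_ball_self hR))
    filter_upwards [this] with s hs using heq hs
  have h5 := (h4.pow 2).sub (B.hasFDerivAt.comp_hasDerivAt a hc)
  have e0 : (0:ℝ) = (2:ℕ) * ph K (c a) ^ (2 - 1) * (B c' / (2 * ph K (c a))) - B c' := by
    push_cast
    simp only [Nat.add_one_sub_one, pow_one]
    field_simp
    ring
  rw [e0]
  exact h5

lemma curve_const (h : Cfg K l C) (hB : IsB K B) {c c' : ℝ → V} {a b : ℝ} (hab : a ≤ b)
    (hU : ∀ s ∈ Icc a b, c s ∈ Udom K) (hc : ∀ s ∈ Icc a b, HasDerivAt c (c' s) s)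
    (ho : ∀ s ∈ Icc a b, ⟪c s, c' s⟫ = 0) : fB K B (c b) = fB K B (c a) := by
  have hd : ∀ s ∈ Icc a b, HasDerivAt (fun s => fB K B (c s)) 0 s := fun s hs =>
    h.curve_zero hB (hU s hs) (hc s hs) (ho s hs)
  exact constant_of_has_deriv_right_zero (f := fun s => fB K B (c s))
    (fun s hs => (hd s hs).continuousAt.continuousWithinAt)
    (fun s hs => (hd s ⟨hs.1, hs.2.le⟩).hasDerivWithinAt) b ⟨hab, le_rfl⟩

lemma arc (h : Cfg K l C) (hB : IsB K B) {e v : V} (he : ‖e‖ = 1) (hv : ‖v‖ = 1)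
    (hev : ⟪e, v⟫ = 0) {r s : ℝ} (hr : 0 < r)
    (hU : ∀ τ ∈ Icc (0:ℝ) 1, √(r ^ 2 + s ^ 2 - τ ^ 2 * s ^ 2) • e + (τ * s) • v ∈ Udom K) :
    fB K B (r • e + s • v) = fB K B (√(r ^ 2 + s ^ 2) • e) := by
  have hpos : ∀ τ ∈ Icc (0:ℝ) 1, 0 < r ^ 2 + s ^ 2 - τ ^ 2 * s ^ 2 := by
    intro τ hτ
    have : τ ^ 2 ≤ 1 := by nlinarith [hτ.1, hτ.2]
    nlinarith [sq_nonneg s, pow_pos hr 2]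
  have := h.curve_const hB (c := fun τ => √(r ^ 2 + s ^ 2 - τ ^ 2 * s ^ 2) • e + (τ * s) • v)
    (c' := fun τ => (-(2 * τ * s ^ 2) / (2 * √(r ^ 2 + s ^ 2 - τ ^ 2 * s ^ 2))) • e + s • v)
    (a := 0) (b := 1) zero_le_one hU ?_ ?_
  · simpa [Real.sqrt_sq hr.le] using this
  · intro τ hτ
    have h1 : HasDerivAt (fun τ : ℝ => r ^ 2 + s ^ 2 - τ ^ 2 * s ^ 2) (-(2 * τ * s ^ 2)) τ := by
      have := ((hasDerivAt_pow 2 τ).mul_const (s ^ 2)).const_sub (r ^ 2 + s ^ 2)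
      simpa using this
    have h2 := (h1.sqrt (hpos τ hτ).ne').smul_const e
    have h3 : HasDerivAt (fun τ : ℝ => (τ * s) • v) (s • v) τ := by
      simpa using ((hasDerivAt_id τ).mul_const s).smul_const v
    exact h2.add h3
  · intro τ hτ
    have hq := Real.sqrt_pos.2 (hpos τ hτ)
    have hve : ⟪v, e⟫ = 0 := by rw [real_inner_comm]; exact hev
    simp only [inner_add_left, inner_add_right, inner_smul_left, inner_smul_right, hev, hve,
      real_inner_self_eq_norm_sq, he, hv]
    simp only [RCLike.conj_to_real]
    field_simp
    ring

lemma fB_ray (h : Cfg K l C) (e : V) {r : ℝ} (hr : r • e ∈ Udom K) :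
    ∃ q, HasDerivWithinAt (fun ρ : ℝ => fB K B (ρ • e)) q (Ici r) r := by
  obtain ⟨⟨dp, hp⟩, -⟩ := h.line_sides hr e
  have h1 : HasDerivWithinAt (fun ρ : ℝ => ph K (ρ • e)) dp (Ici r) r := by
    have h2 : HasDerivWithinAt (fun ρ : ℝ => ρ - r) 1 (Ici r) r :=
      ((hasDerivAt_id r).sub_const r).hasDerivWithinAt
    have h3 := HasDerivWithinAt.comp (h₂ := fun s : ℝ => ph K (r • e + s • e))
      (h := fun ρ : ℝ => ρ - r) (s' := Ici 0) r (by simpa using hp) h2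
      (fun x hx => by simpa using hx)
    rw [mul_one] at h3
    refine h3.congr (fun x _ => ?_) ?_
    · simp only [Function.comp, ← add_smul]; congr 2; ring
    · simp only [Function.comp, ← add_smul]; congr 2; ring
  have h2 : HasDerivAt (fun ρ : ℝ => B (ρ • e)) (B e) r := by
    simpa using (hasDerivAt_id r).mul_const (B e)
  exact ⟨_, (h1.pow 2).sub h2.hasDerivWithinAt⟩

lemma fB_expand (h : Cfg K l C) (hB : IsB K B) {e v : V} (he : ‖e‖ = 1) (hv : ‖v‖ = 1)
    (hev : ⟪e, v⟫ = 0) {r q : ℝ} (hr : 0 < r) (hU : r • e ∈ Udom K)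
    (hq : HasDerivWithinAt (fun ρ : ℝ => fB K B (ρ • e)) q (Ici r) r) :
    (fun s : ℝ => fB K B (r • e + s • v) - fB K B (r • e) - q / (2 * r) * s ^ 2) =o[𝓝 0]
      fun s => s ^ 2 := by
  obtain ⟨R, hR, hb⟩ := Metric.isOpen_iff.1 isOpen_Udom _ hU
  have hrs : ∀ s : ℝ, r ≤ √(r ^ 2 + s ^ 2) := fun s => Real.le_sqrt_of_sq_le (by nlinarith [sq_nonneg s])
  have hcont : Continuous (fun s : ℝ => √(r ^ 2 + s ^ 2)) := by fun_prop
  have ht0 : Tendsto (fun s : ℝ => √(r ^ 2 + s ^ 2)) (𝓝 0) (𝓝 r) := by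
    have := hcont.tendsto 0
    simpa [Real.sqrt_sq hr.le] using this
  have ht : Tendsto (fun s : ℝ => √(r ^ 2 + s ^ 2)) (𝓝 0) (𝓝[≥] r) :=
    tendsto_nhdsWithin_iff.2 ⟨ht0, Eventually.of_forall hrs⟩
  have h1 := (hasDerivWithinAt_iff_isLittleO.1 hq).comp_tendsto ht
  have hdiff : ∀ s : ℝ, √(r ^ 2 + s ^ 2) - r = (√(r ^ 2 + s ^ 2) + r)⁻¹ * s ^ 2 := by
    intro s
    have h2 : 0 < √(r ^ 2 + s ^ 2) + r := by linarith [hrs s]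
    have h3 := Real.sq_sqrt (show 0 ≤ r ^ 2 + s ^ 2 by positivity)
    field_simp
    nlinarith
  have hO : (fun s : ℝ => √(r ^ 2 + s ^ 2) - r) =O[𝓝 0] fun s : ℝ => s ^ 2 := by
    refine IsBigO.of_bound r⁻¹ (Eventually.of_forall fun s => ?_)
    rw [hdiff s, norm_mul]
    gcongr
    rw [Real.norm_eq_abs, abs_of_nonneg (by have := hrs s; positivity)]
    gcongr
    linarith [Real.sqrt_nonneg (r ^ 2 + s ^ 2)]
  have h2 := h1.trans_isBigO hO
  have h3 : (fun s : ℝ => (√(r ^ 2 + s ^ 2) - r) * q - q / (2 * r) * s ^ 2) =o[𝓝 0]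
      fun s : ℝ => s ^ 2 := by
    have h4 : Tendsto (fun s : ℝ => (√(r ^ 2 + s ^ 2) + r)⁻¹ * q - q / (2 * r)) (𝓝 0) (𝓝 0) := by
      have := ((ht0.add_const r).inv₀ (by positivity)).mul_const q |>.sub_const (q / (2 * r))
      convert this using 2
      field_simp; ring
    have h5 := ((isLittleO_one_iff ℝ).2 h4).mul_isBigO (isBigO_refl (fun s : ℝ => s ^ 2) (𝓝 0))
    refine h5.congr' (Eventually.of_forall fun s => ?_) (Eventually.of_forall fun s => ?_)
    · simp only [hdiff]; ring
    · simp
  refine (h2.add h3).congr' ?_ (Eventually.of_forall fun s => rfl)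
  have hsm : ∀ᶠ s : ℝ in 𝓝 0, √(r ^ 2 + s ^ 2) - r + |s| < R := by
    have hcc : Continuous (fun s : ℝ => √(r ^ 2 + s ^ 2) - r + |s|) := by fun_prop
    have := hcc.tendsto 0
    simp only [ne_eq, OfNat.ofNat_ne_zero, not_false_eq_true, zero_pow, add_zero, abs_zero,
      Real.sqrt_sq hr.le, sub_self] at this
    exact this.eventually_lt_const hR
  filter_upwards [hsm] with s hs
  have harc := h.arc hB he hv hev (s := s) hr (fun τ hτ => hb ?_)
  · simp only [Function.comp]
    rw [harc, smul_eq_mul]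
    ring
  · have hτ2 : τ ^ 2 ≤ 1 := by nlinarith [hτ.1, hτ.2]
    have e1 : r ≤ √(r ^ 2 + s ^ 2 - τ ^ 2 * s ^ 2) :=
      Real.le_sqrt_of_sq_le (by nlinarith [sq_nonneg s])
    have e2 : √(r ^ 2 + s ^ 2 - τ ^ 2 * s ^ 2) ≤ √(r ^ 2 + s ^ 2) :=
      Real.sqrt_le_sqrt (by nlinarith [sq_nonneg (τ * s)])
    rw [mem_ball, dist_eq_norm]
    have e3 : √(r ^ 2 + s ^ 2 - τ ^ 2 * s ^ 2) • e + (τ * s) • v - r • e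
        = (√(r ^ 2 + s ^ 2 - τ ^ 2 * s ^ 2) - r) • e + (τ * s) • v := by module
    rw [e3]
    refine lt_of_le_of_lt (norm_add_le _ _) ?_
    rw [norm_smul, norm_smul, he, hv, mul_one, mul_one, Real.norm_eq_abs, Real.norm_eq_abs,
      abs_of_nonneg (by linarith), abs_mul, abs_of_nonneg hτ.1]
    have := mul_le_mul_of_nonneg_right hτ.2 (abs_nonneg s)
    linarith

lemma sq_quot {F : ℝ → ℝ} {κ a0 : ℝ} {a : ℝ → ℝ}
    (hF : (fun s : ℝ => F s - F 0 - κ * s ^ 2) =o[𝓝 0] fun s => s ^ 2)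
    (ha : Tendsto a (𝓝[≠] 0) (𝓝 a0)) :
    Tendsto (fun t => (F (t * a t) - F 0) / t ^ 2) (𝓝[≠] 0) (𝓝 (κ * a0 ^ 2)) := by
  have hid : Tendsto (fun t : ℝ => t) (𝓝[≠] 0) (𝓝 0) := tendsto_id.mono_left nhdsWithin_le_nhds
  have hs : Tendsto (fun t => t * a t) (𝓝[≠] 0) (𝓝 0) := by simpa using hid.mul ha
  have h1 := hF.comp_tendsto hs
  have hO : (fun t => (t * a t) ^ 2) =O[𝓝[≠] 0] fun t : ℝ => t ^ 2 := by
    have := ((isBigO_refl (fun t : ℝ => t) (𝓝[≠] 0)).mul (ha.isBigO_one ℝ)).pow 2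
    simpa using this
  have h2 := (h1.trans_isBigO hO).tendsto_div_nhds_zero
  have h3 := h2.add ((ha.pow 2).const_mul κ)
  rw [zero_add] at h3
  refine h3.congr' ?_
  filter_upwards [self_mem_nhdsWithin] with t ht
  have ht : t ≠ 0 := ht
  simp only [Function.comp]
  field_simp
  ring

lemma lim_second (h : Cfg K l C) (hB : IsB K B) {e v : V} (he : ‖e‖ = 1) (hv : ‖v‖ = 1)
    (hev : ⟪e, v⟫ = 0) {r q : ℝ} (hr : 0 < r) (hU : r • e ∈ Udom K)
    (hq : HasDerivWithinAt (fun ρ : ℝ => fB K B (ρ • e)) q (Ici r) r) :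
    Tendsto (fun t => (C v t - B v * t) / t ^ 2) (𝓝[≠] 0) (𝓝 (q * l / r)) := by
  have hexp := h.fB_expand hB he hv hev hr hU hq
  obtain ⟨k, k', hk, hk', hev'⟩ := h.chord_data hU hv (by rw [inner_smul_left, hev, mul_zero])
  set T := ph K (r • e) with hT
  have hTp : 0 < T := h.ph_pos hU
  have hexp' : (fun s : ℝ => (fun s : ℝ => fB K B (r • e + s • v)) s -
      (fun s : ℝ => fB K B (r • e + s • v)) 0 - q / (2 * r) * s ^ 2) =o[𝓝 0] fun s => s ^ 2 := by
    simpa using hexp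
  have a1 := sq_quot hexp' (hk.add_const l)
  have a2 := sq_quot hexp' (hk'.add_const l)
  have h4 := two_tendsto hk hk'
  have h5 := (a1.sub a2).div h4 (by positivity)
  have e1 : (q / (2 * r) * (T + l) ^ 2 - q / (2 * r) * (-T + l) ^ 2) / (2 * T) = q * l / r := by
    field_simp; ring
  rw [e1] at h5
  refine h5.congr' ?_
  filter_upwards [h4.eventually_ne (by positivity : 2 * T ≠ 0), hev', self_mem_nhdsWithin]
    with t ht ht2 ht0
  have ht0 : t ≠ 0 := ht0
  obtain ⟨-, -, -, e2⟩ := ht2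
  simp only [Pi.div_apply, fB, map_add, map_smul, smul_eq_mul, zero_smul, add_zero]
  rw [div_eq_iff ht]
  field_simp
  linarith
end Cfg
end geom3

section geom4
variable {V : Type*} [NormedAddCommGroup V] [InnerProductSpace ℝ V]
variable {K : Set (V × ℝ)} {l : ℝ} {C : V → ℝ → ℝ}

namespace Cfg
variable {B : V →L[ℝ] ℝ} [FiniteDimensional ℝ V]

lemma ph_cont (h : Cfg K l C) {x : V} (hx : x ∈ Udom K) : ContinuousAt (ph K) x := by
  obtain ⟨M, R, ψ, hR, hU, hlip, heq⟩ := h.loc_lip hx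
  exact hlip.continuous.continuousAt.congr
    (Filter.eventuallyEq_of_mem (isOpen_ball.mem_nhds (mem_ball_self hR)) heq).symm

lemma star (h : Cfg K l C) {e : V} {ρ σ : ℝ} (hρ : ρ • e ∈ Udom K) (h0 : 0 ≤ σ) (h1 : σ ≤ ρ) :
    σ • e ∈ Udom K := by
  rcases eq_or_lt_of_le (h0.trans h1) with h2 | h2
  · have : σ = ρ := by linarith
    rwa [this]
  · have := h.convex_Udom h.zero_mem hρ (a := 1 - σ / ρ) (b := σ / ρ)
      (by rw [sub_nonneg, div_le_one h2]; exact h1) (by positivity) (by ring)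
    rw [smul_zero, zero_add, smul_smul, div_mul_cancel₀ _ h2.ne'] at this
    exact this

lemma ray_quad (hd : 2 ≤ Module.finrank ℝ V) (h : Cfg K l C) (hB : IsB K B) {e : V}
    (he : ‖e‖ = 1) : ∃ κ : ℝ,
      (∀ v : V, ‖v‖ = 1 → ⟪e, v⟫ = 0 →
        Tendsto (fun t => (C v t - B v * t) / t ^ 2) (𝓝[≠] 0) (𝓝 (κ * l))) ∧
      ∀ ρ : ℝ, 0 ≤ ρ → ρ • e ∈ Udom K → fB K B (ρ • e) = fB K B 0 + κ / 2 * ρ ^ 2 := by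
  obtain ⟨R, hR, hb⟩ := Metric.isOpen_iff.1 isOpen_Udom _ h.zero_mem
  have hr0 : (R / 2) • e ∈ Udom K := hb (by
    rw [mem_ball_zero_iff, norm_smul, he, Real.norm_eq_abs, abs_of_pos (by positivity)]; linarith)
  obtain ⟨q0, hq0⟩ := h.fB_ray (B := B) e hr0
  obtain ⟨v0, hv0, hve⟩ := exists_orth hd e
  have hev : ⟪e, v0⟫ = 0 := by rw [real_inner_comm]; exact hve
  have lim : ∀ v : V, ‖v‖ = 1 → ⟪e, v⟫ = 0 →
        Tendsto (fun t => (C v t - B v * t) / t ^ 2) (𝓝[≠] 0) (𝓝 (q0 / (R / 2) * l)) := by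
    intro v hv hev
    have := h.lim_second hB he hv hev (by positivity) hr0 hq0
    convert this using 2
    ring
  set κ := q0 / (R / 2) with hκ
  refine ⟨κ, lim, fun ρ hρ hU => ?_⟩
  have hder : ∀ σ ∈ Ico 0 ρ,
      HasDerivWithinAt (fun σ : ℝ => fB K B (σ • e) - κ / 2 * σ ^ 2) 0 (Ici σ) σ := by
    intro σ hσ
    have hσU := h.star hU hσ.1 hσ.2.le
    have hsq : HasDerivWithinAt (fun σ : ℝ => κ / 2 * σ ^ 2) (κ * σ) (Ici σ) σ := by
      have := ((hasDerivAt_pow 2 σ).const_mul (κ / 2)).hasDerivWithinAt (s := Ici σ)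
      have e1 : κ * σ = κ / 2 * ((2:ℕ) * σ ^ (2 - 1)) := by push_cast; simp only [pow_one]; ring
      rw [e1]; exact this
    rcases eq_or_lt_of_le hσ.1 with h0 | h0
    · subst h0
      have hc : HasDerivAt (fun s : ℝ => s • e) e 0 := by
        simpa using (hasDerivAt_id (0:ℝ)).smul_const e
      have := (h.curve_zero hB (c := fun s : ℝ => s • e) hσU hc (by simp)).hasDerivWithinAt
        (s := Ici 0)
      have h2 := this.sub hsq
      rw [mul_zero, sub_zero] at h2
      exact h2
    · obtain ⟨q, hq⟩ := h.fB_ray (B := B) e hσU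
      have l1 := h.lim_second hB he hv0 hev h0 hσU hq
      have := tendsto_nhds_unique l1 (lim v0 hv0 hev)
      have hqe : q = κ * σ := by
        have hl := h.l0
        field_simp at this
        linarith
      have h2 := hq.sub hsq
      rw [hqe, sub_self] at h2
      exact h2
  have hcont : ContinuousOn (fun σ : ℝ => fB K B (σ • e) - κ / 2 * σ ^ 2) (Icc 0 ρ) := by
    intro σ hσ
    have hσU := h.star hU hσ.1 hσ.2
    have h1 : ContinuousAt (fun σ : ℝ => ph K (σ • e)) σ :=
      ContinuousAt.comp (g := ph K) (f := fun σ : ℝ => σ • e) (h.ph_cont hσU) (by fun_prop)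
    have h2 : ContinuousAt (fun σ : ℝ => ph K (σ • e) ^ 2 - B (σ • e) - κ / 2 * σ ^ 2) σ := by
      fun_prop
    exact h2.continuousWithinAt
  have := constant_of_has_deriv_right_zero hcont hder ρ ⟨hρ, le_rfl⟩
  simp only [zero_smul] at this
  linarith

lemma quad (hd : 2 ≤ Module.finrank ℝ V) (h : Cfg K l C) (hB : IsB K B) :
    ∃ γ : ℝ, ∀ y ∈ Udom K, ph K y ^ 2 = ph K 0 ^ 2 + B y - γ * ‖y‖ ^ 2 := by
  have key : ∀ e : {e : V // ‖e‖ = 1}, _ := fun e => h.ray_quad hd hB e.2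
  choose κ hlim hquad using key
  obtain ⟨R, hR, hb⟩ := Metric.isOpen_iff.1 isOpen_Udom _ h.zero_mem
  have inU : ∀ e : V, ‖e‖ = 1 → (R / 2) • e ∈ Udom K := fun e he => hb (by
    rw [mem_ball_zero_iff, norm_smul, he, Real.norm_eq_abs, abs_of_pos (by positivity)]; linarith)
  have acute : ∀ e e' : {e : V // ‖e‖ = 1}, 0 < ⟪e.1, e'.1⟫ → κ e = κ e' := by
    rintro ⟨e, he⟩ ⟨e', he'⟩ hpos
    simp only at hpos
    set a := ⟪e, e'⟫ with ha
    set w := e' - a • e with hw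
    have hew : ⟪e, w⟫ = 0 := by
      rw [hw, inner_sub_right, inner_smul_right, real_inner_self_eq_norm_sq, he, ← ha]; ring
    rcases eq_or_ne w 0 with hw0 | hw0
    · have e1 : e' = a • e := sub_eq_zero.1 hw0
      have e2 : a = 1 := by
        have : ‖e'‖ = |a| * ‖e‖ := by conv_lhs => rw [e1, norm_smul, Real.norm_eq_abs]
        rw [he, he', abs_of_pos hpos] at this; linarith
      rw [e2, one_smul] at e1
      subst e1; rfl
    · have hwn : ‖w‖ ≠ 0 := norm_ne_zero_iff.2 hw0
      have hv1 : ‖(‖w‖⁻¹ • w)‖ = 1 := by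
        rw [norm_smul, norm_inv, norm_norm, inv_mul_cancel₀ hwn]
      have hev : ⟪e, ‖w‖⁻¹ • w⟫ = 0 := by rw [inner_smul_right, hew, mul_zero]
      have hab : a ^ 2 + ‖w‖ ^ 2 = 1 := by
        have : ‖e'‖ ^ 2 = ‖a • e + w‖ ^ 2 := by rw [hw]; congr 2; module
        rw [← real_inner_self_eq_norm_sq, ← real_inner_self_eq_norm_sq] at this
        simp only [inner_add_left, inner_add_right, inner_smul_left, inner_smul_right, hew,
          real_inner_comm e w, real_inner_self_eq_norm_sq, he, he'] at this
        simp only [RCLike.conj_to_real] at this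
        linarith
      have hr : 0 < R / 2 * a := by positivity
      have hsum : (R / 2 * a) ^ 2 + (R / 2 * ‖w‖) ^ 2 = (R / 2) ^ 2 := by
        rw [mul_pow, mul_pow, ← mul_add, hab, mul_one]
      have harc := h.arc hB he hv1 hev (s := R / 2 * ‖w‖) hr (fun τ hτ => hb ?_)
      · rw [hsum, Real.sqrt_sq (by positivity)] at harc
        have e3 : (R / 2 * a) • e + (R / 2 * ‖w‖) • ‖w‖⁻¹ • w = (R / 2) • e' := by
          rw [smul_smul, mul_assoc, mul_inv_cancel₀ hwn, mul_one, hw]; module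
        rw [e3] at harc
        have q1 := hquad ⟨e, he⟩ (R / 2) (by positivity) (inU e he)
        have q2 := hquad ⟨e', he'⟩ (R / 2) (by positivity) (inU e' he')
        simp only at q1 q2
        rw [harc, q1] at q2
        have : 0 < (R / 2) ^ 2 := by positivity
        have h6 : κ ⟨e, he⟩ * (R / 2) ^ 2 = κ ⟨e', he'⟩ * (R / 2) ^ 2 := by linarith
        exact mul_right_cancel₀ this.ne' h6
      · rw [mem_ball_zero_iff]
        have hτ2 : τ ^ 2 ≤ 1 := by nlinarith [hτ.1, hτ.2]
        have hnn : 0 ≤ (R / 2 * a) ^ 2 + (R / 2 * ‖w‖) ^ 2 - τ ^ 2 * (R / 2 * ‖w‖) ^ 2 := by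
          nlinarith [sq_nonneg (R / 2 * ‖w‖), sq_nonneg (R / 2 * a)]
        have hn : ‖√((R / 2 * a) ^ 2 + (R / 2 * ‖w‖) ^ 2 - τ ^ 2 * (R / 2 * ‖w‖) ^ 2) • e
            + (τ * (R / 2 * ‖w‖)) • ‖w‖⁻¹ • w‖ ^ 2 = (R / 2) ^ 2 := by
          rw [← real_inner_self_eq_norm_sq]
          have hve : ⟪‖w‖⁻¹ • w, e⟫ = 0 := by rw [real_inner_comm]; exact hev
          generalize ‖w‖⁻¹ • w = v at *
          simp only [inner_add_left, inner_add_right, inner_smul_left, inner_smul_right, hev, hve,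
            real_inner_self_eq_norm_sq, he, hv1]
          simp only [RCLike.conj_to_real]
          have := Real.mul_self_sqrt hnn
          linarith
        have := (sq_eq_sq₀ (norm_nonneg _) (by positivity)).1 hn
        rw [this]; linarith
  have all : ∀ e e' : {e : V // ‖e‖ = 1}, κ e = κ e' := by
    rintro ⟨e, he⟩ ⟨e', he'⟩
    rcases eq_or_ne (e + e') 0 with h0 | h0
    · obtain ⟨v, hv, hve⟩ := exists_orth hd e
      have l1 := hlim ⟨e, he⟩ v hv (by rw [real_inner_comm]; exact hve)
      have e1 : e' = -e := (neg_eq_of_add_eq_zero_right h0).symm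
      have l2 := hlim ⟨e', he'⟩ v hv (by
        simp only [e1]; rw [inner_neg_left, real_inner_comm, hve, neg_zero])
      exact mul_right_cancel₀ h.l0 (tendsto_nhds_unique l1 l2)
    · have hzn : 0 < ‖e + e'‖ := norm_pos_iff.2 h0
      have hz1 : ‖(‖e + e'‖⁻¹ • (e + e'))‖ = 1 := by
        rw [norm_smul, norm_inv, norm_norm, inv_mul_cancel₀ hzn.ne']
      have hsq : 0 < 1 + ⟪e, e'⟫ := by
        have : ‖e + e'‖ ^ 2 = 2 * (1 + ⟪e, e'⟫) := by
          rw [norm_add_sq_real, he, he']; ring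
        have := pow_pos hzn 2
        linarith
      have c1 := acute ⟨e, he⟩ ⟨_, hz1⟩ (by
        simp only [inner_smul_right, inner_add_right, real_inner_self_eq_norm_sq, he]
        rw [one_pow]; positivity)
      have c2 := acute ⟨e', he'⟩ ⟨_, hz1⟩ (by
        simp only [inner_smul_right, inner_add_right, real_inner_self_eq_norm_sq, he']
        rw [one_pow, real_inner_comm, add_comm ⟪e, e'⟫]; positivity)
      rw [c1, c2]
  obtain ⟨e0, he0, -⟩ := exists_orth hd (0 : V)
  refine ⟨-(κ ⟨e0, he0⟩ / 2), fun y hy => ?_⟩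
  rcases eq_or_ne y 0 with rfl | hy0
  · simp
  have hyn : ‖y‖ ≠ 0 := norm_ne_zero_iff.2 hy0
  have hv1 : ‖(‖y‖⁻¹ • y)‖ = 1 := by
    rw [norm_smul, norm_inv, norm_norm, inv_mul_cancel₀ hyn]
  have ey : ‖y‖ • ‖y‖⁻¹ • y = y := by rw [smul_smul, mul_inv_cancel₀ hyn, one_smul]
  have := hquad ⟨_, hv1⟩ ‖y‖ (norm_nonneg y) (by rw [ey]; exact hy)
  rw [all ⟨_, hv1⟩ ⟨e0, he0⟩] at this
  simp only [ey] at this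
  simp only [fB, map_zero] at this
  linarith

end Cfg
end geom4

section geom5
variable {V : Type*} [NormedAddCommGroup V] [InnerProductSpace ℝ V]
variable {K : Set (V × ℝ)} {l : ℝ} {C : V → ℝ → ℝ}

namespace Cfg
variable [FiniteDimensional ℝ V]

lemma smul_mem_U (h : Cfg K l C) {y : V} {k : ℝ} (hy : (y, k) ∈ K) {t : ℝ} (h0 : 0 ≤ t)
    (h1 : t < 1) : t • y ∈ Udom K := by
  have hy0 : (y, (0:ℝ)) ∈ K := h.mem_of_abs hy (by
    rw [abs_zero]; exact (abs_nonneg k).trans (h.abs_le_ph hy))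
  have := h.cvx.combo_interior_self_mem_interior h.zero hy0 (a := 1 - t) (b := t) (by linarith) h0
      (by ring)
  simpa [Udom] using this

lemma wlem (hd : 2 ≤ Module.finrank ℝ V) (h : Cfg K l C) {y0 : V} {k0 : ℝ}
    (hy : (y0, k0) ∈ K) (hk0 : k0 ≠ 0) : y0 ∈ Udom K := by
  by_contra hno
  obtain ⟨N, hN⟩ := geometric_hahn_banach_open_point h.convex_Udom isOpen_Udom hno
  have hN0 : 0 < N y0 := by simpa using hN 0 h.zero_mem
  have hsup : ∀ y k, (y, k) ∈ K → N y ≤ N y0 := by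
    intro y k hyk
    have ht : Tendsto (fun t : ℝ => t * N y) (𝓝[<] 1) (𝓝 (N y)) := by
      have : Continuous (fun t : ℝ => t * N y) := by fun_prop
      simpa using (this.tendsto 1).mono_left (nhdsWithin_le_nhds (s := Iio 1))
    refine le_of_tendsto ht ?_
    have h0 : ∀ᶠ t : ℝ in 𝓝[<] 1, 0 < t :=
      mem_nhdsWithin_of_mem_nhds (lt_mem_nhds (by norm_num))
    filter_upwards [h0, self_mem_nhdsWithin] with t ht0 ht1
    have := hN _ (h.smul_mem_U hyk ht0.le ht1)
    rw [map_smul, smul_eq_mul] at this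
    exact this.le
  have hy0n : y0 ≠ 0 := fun h0 => hno (by rw [h0]; exact h.zero_mem)
  have hr : 0 < ‖y0‖ := norm_pos_iff.2 hy0n
  have hl : 0 < |l| := abs_pos.2 h.l0
  have hk0p : 0 < |k0| := abs_pos.2 hk0
  obtain ⟨k, hkK, hkneg⟩ : ∃ k, (y0, k) ∈ K ∧ k * (k + l) < 0 := by
    set δ := min (1/2) (|k0| / |l|) with hδ
    have d0 : 0 < δ := by positivity
    have d1 : δ ≤ 1/2 := min_le_left _ _
    have d2 : δ ≤ |k0| / |l| := min_le_right _ _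
    refine ⟨-δ * l, h.mem_of_abs hy (le_trans ?_ (h.abs_le_ph hy)), ?_⟩
    · rw [abs_mul, abs_neg, abs_of_pos d0]
      exact (le_div_iff₀ hl).1 d2
    · have : -δ * l * (-δ * l + l) = -(δ * (1 - δ) * l ^ 2) := by ring
      rw [this]
      have : 0 < l ^ 2 := by have := h.l0; positivity
      have : 0 < 1 - δ := by linarith
      have : 0 < δ * (1 - δ) * l ^ 2 := by positivity
      linarith
  have refl1 : ∀ v : V, ‖v‖ = 1 → ∀ t : ℝ, 0 < t → ⟪y0, v⟫ = t * (k + l) →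
      (C v t - 2 * k) * N v ≤ 0 := by
    intro v hv t ht hyv
    have h1 := h.refl v hv t (y0 - (k + l) • t • v) k (by
      rw [inner_sub_left, hyv, inner_smul_left, inner_smul_left, real_inner_self_eq_norm_sq, hv]
      simp only [RCLike.conj_to_real]
      ring) (by simpa using hkK)
    have h2 := hsup _ _ h1
    simp only [map_add, map_sub, map_smul, smul_eq_mul] at h2
    have h3 : t * ((C v t - 2 * k) * N v) ≤ 0 := by linarith
    by_contra hc
    have := mul_pos ht (not_le.1 hc)
    linarith
  let vt : V → ℝ → V := fun v0 t =>
    (t * (k + l) / ‖y0‖ ^ 2) • y0 + √(1 - t ^ 2 * (k + l) ^ 2 / ‖y0‖ ^ 2) • v0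
  have hcont : ∀ v0 : V, Tendsto (vt v0) (𝓝[>] 0) (𝓝 v0) := by
    intro v0
    have : Continuous (vt v0) := by
      simp only [vt]
      fun_prop
    have h1 := (this.tendsto 0).mono_left (nhdsWithin_le_nhds (s := Ioi 0))
    simpa [vt] using h1
  have hsmall : ∀ᶠ t : ℝ in 𝓝[>] 0, 0 < 1 - t ^ 2 * (k + l) ^ 2 / ‖y0‖ ^ 2 := by
    have : Continuous (fun t : ℝ => 1 - t ^ 2 * (k + l) ^ 2 / ‖y0‖ ^ 2) := by fun_prop
    have h1 := (this.tendsto 0).mono_left (nhdsWithin_le_nhds (s := Ioi 0))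
    exact h1.eventually_const_lt (by norm_num)
  have hprop : ∀ v0 : V, ‖v0‖ = 1 → ⟪y0, v0⟫ = 0 → ∀ᶠ t : ℝ in 𝓝[>] 0,
      ‖vt v0 t‖ = 1 ∧ ⟪y0, vt v0 t⟫ = t * (k + l) := by
    intro v0 hv0 hyv
    filter_upwards [hsmall] with t ht
    have hvy : ⟪v0, y0⟫ = 0 := by rw [real_inner_comm]; exact hyv
    constructor
    · have : ‖vt v0 t‖ ^ 2 = 1 ^ 2 := by
        rw [← real_inner_self_eq_norm_sq]
        simp only [vt, inner_add_left, inner_add_right, inner_smul_left, inner_smul_right, hyv, hvy,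
          real_inner_self_eq_norm_sq, hv0]
        simp only [RCLike.conj_to_real]
        have h2 := Real.mul_self_sqrt ht.le
        have h3 : t * (k + l) / ‖y0‖ ^ 2 * (t * (k + l) / ‖y0‖ ^ 2 * ‖y0‖ ^ 2)
          = t ^ 2 * (k + l) ^ 2 / ‖y0‖ ^ 2 := by field_simp
        linarith
      exact (sq_eq_sq₀ (norm_nonneg _) zero_le_one).1 this
    · simp only [vt, inner_add_right, inner_smul_right, hyv, real_inner_self_eq_norm_sq]
      field_simp
      ring
  have hClim : ∀ v0 : V, ‖v0‖ = 1 → ⟪y0, v0⟫ = 0 →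
      Tendsto (fun t => C (vt v0 t) t) (𝓝[>] 0) (𝓝 0) := by
    intro v0 hv0 hyv
    rw [Metric.tendsto_nhds]
    intro ε hε
    obtain ⟨r, hr, hC⟩ := h.C_small hε
    have h1 : ∀ᶠ t : ℝ in 𝓝[>] 0, t < r := mem_nhdsWithin_of_mem_nhds (gt_mem_nhds hr)
    filter_upwards [hprop v0 hv0 hyv, h1, self_mem_nhdsWithin] with t ht ht1 ht0
    have ht0 : 0 < t := ht0
    rw [Real.dist_eq, sub_zero]
    exact hC _ ht.1 t (by rwa [abs_of_pos ht0])
  have half : ∀ v0 : V, ‖v0‖ = 1 → ⟪y0, v0⟫ = 0 → (0 - 2 * k) * N v0 ≤ 0 := by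
    intro v0 hv0 hyv
    have h1 : Tendsto (fun t => (C (vt v0 t) t - 2 * k) * N (vt v0 t)) (𝓝[>] 0)
        (𝓝 ((0 - 2 * k) * N v0)) :=
      ((hClim v0 hv0 hyv).sub_const _).mul ((N.continuous.tendsto v0).comp (hcont v0))
    refine le_of_tendsto h1 ?_
    filter_upwards [hprop v0 hv0 hyv, self_mem_nhdsWithin] with t ht ht0
    exact refl1 _ ht.1 t ht0 ht.2
  obtain ⟨v0, hv0, hvy⟩ := exists_orth hd y0
  have hyv : ⟪y0, v0⟫ = 0 := by rw [real_inner_comm]; exact hvy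
  have hk : k ≠ 0 := by rintro rfl; simp at hkneg
  have hNv : N v0 = 0 := by
    have h1 := half v0 hv0 hyv
    have h2 := half (-v0) (by rwa [norm_neg]) (by rw [inner_neg_right, hyv, neg_zero])
    rw [map_neg] at h2
    have : k * N v0 = 0 := by linarith
    exact (mul_eq_zero.1 this).resolve_left hk
  have h1 : Tendsto (fun t => (C (vt v0 t) t - 2 * k) * (k + l)) (𝓝[>] 0)
      (𝓝 ((0 - 2 * k) * (k + l))) := ((hClim v0 hv0 hyv).sub_const _).mul_const _
  have h2 : (0 - 2 * k) * (k + l) ≤ 0 := by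
    refine le_of_tendsto h1 ?_
    filter_upwards [hprop v0 hv0 hyv, self_mem_nhdsWithin] with t ht ht0
    have ht0 : 0 < t := ht0
    have h3 := refl1 _ ht.1 t ht0 ht.2
    simp only [vt, map_add, map_smul, smul_eq_mul, hNv, mul_zero, add_zero] at h3
    have hp : 0 < t * N y0 / ‖y0‖ ^ 2 := by positivity
    by_contra hc
    have h4 := mul_pos hp (not_le.1 hc)
    have h5 : t * N y0 / ‖y0‖ ^ 2 * ((C (vt v0 t) t - 2 * k) * (k + l))
      = (C (vt v0 t) t - 2 * k) * (t * (k + l) / ‖y0‖ ^ 2 * N y0) := by ring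
    rw [h5] at h4
    simp only [vt] at h4
    linarith
  linarith

theorem core (hd : 2 ≤ Module.finrank ℝ V) (h : Cfg K l C) :
    ∃ (α γ : ℝ) (B : V →L[ℝ] ℝ), 0 < α ∧ 0 < γ ∧
      ∀ y k, (y, k) ∈ K ↔ k ^ 2 ≤ α + B y - γ * ‖y‖ ^ 2 := by
  obtain ⟨B, hB⟩ := h.exists_B hd
  obtain ⟨γ, hq⟩ := h.quad hd hB
  set α := ph K 0 ^ 2 with hα
  have hα0 : 0 < α := by have := h.ph_pos h.zero_mem; positivity
  have cont : ∀ y : V, (∀ t ∈ Icc (0:ℝ) 1, 0 < α + B (t • y) - γ * ‖t • y‖ ^ 2) → y ∈ Udom K := by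
    intro y hpos
    have hcl : {t : ℝ | t • y ∈ Udom K} ∩ Icc 0 1 =
        {t : ℝ | (t • y, √(α + B (t • y) - γ * ‖t • y‖ ^ 2)) ∈ K} ∩ Icc 0 1 := by
      ext t
      constructor
      · rintro ⟨h1, h2⟩
        refine ⟨?_, h2⟩
        have h1 : t • y ∈ Udom K := h1
        show (t • y, √(α + B (t • y) - γ * ‖t • y‖ ^ 2)) ∈ K
        rw [← hq _ h1, Real.sqrt_sq (h.ph_pos h1).le]
        exact h.ph_mem (h.mem_U h1)
      · rintro ⟨h1, h2⟩
        exact ⟨h.wlem hd h1 (Real.sqrt_pos.2 (hpos t h2)).ne', h2⟩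
    have hclosed : IsClosed ({t : ℝ | t • y ∈ Udom K} ∩ Icc 0 1) := by
      rw [hcl]
      refine IsClosed.inter ?_ isClosed_Icc
      have : Continuous (fun t : ℝ => (t • y, √(α + B (t • y) - γ * ‖t • y‖ ^ 2))) := by fun_prop
      exact h.cpt.isClosed.preimage this
    have := hclosed.Icc_subset_of_forall_mem_nhdsWithin (by simpa using h.zero_mem) (by
      rintro t ⟨ht, -⟩
      have hc : Continuous (fun t : ℝ => t • y) := by fun_prop
      exact mem_nhdsWithin_of_mem_nhds ((isOpen_Udom.preimage hc).mem_nhds ht))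
    have h1 := this (show (1:ℝ) ∈ Icc (0:ℝ) 1 by simp)
    simpa using h1
  have hγ : 0 < γ := by
    by_contra hneg
    obtain ⟨v, hv, hvB⟩ := exists_orth hd ((InnerProductSpace.toDual ℝ V).symm B)
    have hBv : B v = 0 := by
      rw [real_inner_comm, InnerProductSpace.toDual_symm_apply] at hvB; exact hvB
    obtain ⟨M, hM⟩ := h.cpt.isBounded.exists_norm_le
    have hin : (|M| + 1) • v ∈ Udom K := by
      apply cont
      intro t _
      rw [map_smul, map_smul, hBv]
      have := sq_nonneg ‖t • (|M| + 1) • v‖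
      simp only [smul_zero]
      nlinarith
    have h1 := hM _ (h.mem_U hin)
    have h2 : ‖(|M| + 1) • v‖ ≤ M := le_trans (le_max_left _ _) h1
    rw [norm_smul, hv, Real.norm_eq_abs, abs_of_pos (by positivity)] at h2
    linarith [le_abs_self M]
  refine ⟨α, γ, B, hα0, hγ, fun y k => ⟨fun hy => ?_, fun hy => ?_⟩⟩
  · have c1 : Continuous (fun t : ℝ => α + B (t • y) - γ * ‖t • y‖ ^ 2 - (t * k) ^ 2) := by fun_prop
    have c2 := (c1.tendsto 1).mono_left (nhdsWithin_le_nhds (s := Iio 1))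
    have c3 : 0 ≤ α + B ((1:ℝ) • y) - γ * ‖(1:ℝ) • y‖ ^ 2 - (1 * k) ^ 2 := by
      refine ge_of_tendsto c2 ?_
      have h0 : ∀ᶠ t : ℝ in 𝓝[<] 1, 0 < t :=
        mem_nhdsWithin_of_mem_nhds (lt_mem_nhds (by norm_num))
      filter_upwards [h0, self_mem_nhdsWithin] with t ht0 ht1
      have hU := h.smul_mem_U hy ht0.le ht1
      have hK : (t • y, t * k) ∈ K := by
        have := h.cvx.smul_mem_of_zero_mem (interior_subset h.zero) hy ⟨ht0.le, le_of_lt ht1⟩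
        simpa using this
      have h1 := h.abs_le_ph hK
      have h2 := sq_le_sq' (by linarith [abs_nonneg (t * k)]) h1
      rw [sq_abs, hq _ hU] at h2
      linarith
    simp only [one_smul, one_mul] at c3
    linarith
  · have c1 : Continuous (fun t : ℝ => (t • y, t * k)) := by fun_prop
    have c2 := (c1.tendsto 1).mono_left (nhdsWithin_le_nhds (s := Iio 1))
    simp only [one_smul, one_mul] at c2
    refine h.cpt.isClosed.mem_of_tendsto c2 ?_
    have h0 : ∀ᶠ t : ℝ in 𝓝[<] 1, 0 < t :=
      mem_nhdsWithin_of_mem_nhds (lt_mem_nhds (by norm_num))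
    have low : ∀ τ : ℝ, 0 ≤ τ → τ ≤ 1 →
        (1 - τ) * α + τ * k ^ 2 ≤ α + B (τ • y) - γ * ‖τ • y‖ ^ 2 := by
      intro τ h0 h1
      rw [map_smul, norm_smul, smul_eq_mul, mul_pow, Real.norm_eq_abs, sq_abs]
      have h2 := mul_le_mul_of_nonneg_left hy h0
      have h3 : 0 ≤ γ * ‖y‖ ^ 2 * (τ * (1 - τ)) :=
        mul_nonneg (by positivity) (mul_nonneg h0 (by linarith))
      nlinarith
    filter_upwards [h0, self_mem_nhdsWithin] with t ht0 ht1
    have ht1 : t < 1 := ht1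
    have hU : t • y ∈ Udom K := by
      apply cont
      intro τ hτ
      rw [smul_smul]
      have hτt : τ * t < 1 := by nlinarith [hτ.1, hτ.2]
      have hτ0 : 0 ≤ τ * t := mul_nonneg hτ.1 ht0.le
      refine lt_of_lt_of_le ?_ (low (τ * t) hτ0 hτt.le)
      have : 0 < (1 - τ * t) * α := mul_pos (by linarith) hα0
      have : 0 ≤ τ * t * k ^ 2 := by positivity
      linarith
    refine h.mem_of_abs (h.mem_U hU) (abs_le_of_sq_le_sq ?_ (h.ph_pos hU).le)
    rw [hq _ hU]
    refine le_trans ?_ (low t ht0.le ht1.le)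
    have e1 : 0 ≤ (1 - t) * α := mul_nonneg (by linarith) hα0.le
    have e2 : t ^ 2 * k ^ 2 ≤ t * k ^ 2 := mul_le_mul_of_nonneg_right (by nlinarith) (sq_nonneg k)
    rw [mul_pow]; linarith
end Cfg
end geom5

theorem lemR {n : ℕ} (hn : 3 ≤ n) (K : Set (Euc n)) (Hd : Submodule ℝ (Euc n)) (u : Euc n)
    (hu : ‖u‖ = 1) (hHd : ∀ x, x ∈ Hd ↔ ⟪x, u⟫ = 0) (p : Euc n)
    (hsec : ∀ P : AffineSubspace ℝ (Euc n), IsHyperplane P → p ∈ P →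
      ∃ L : AffineSubspace ℝ (Euc n), Module.finrank ℝ L.direction = n - 2 ∧
        L.direction ≤ Hd ∧ IsSectionSymmPlane K P L)
    (v : Euc n) (hv : ‖v‖ = 1) (hvu : ⟪v, u⟫ = 0) (t : ℝ) :
    ∃ c : ℝ, ∀ x : Euc n, ⟪x, u⟫ = 0 → ⟪x, v⟫ = 0 → ∀ s : ℝ,
      p + x + s • (t • v + u) ∈ K → p + x + (c - s) • (t • v + u) ∈ K := by
  have huv : ⟪u, v⟫ = 0 := by rw [real_inner_comm]; exact hvu
  have huu : ⟪u, u⟫ = 1 := by rw [real_inner_self_eq_norm_sq, hu]; norm_num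
  have hvv : ⟪v, v⟫ = 1 := by rw [real_inner_self_eq_norm_sq, hv]; norm_num
  set q : Euc n := v - t • u with hq
  set w : Euc n := t • v + u with hw
  have hq0 : q ≠ 0 := by
    intro h
    have : ⟪q, v⟫ = 0 := by rw [h]; simp
    rw [hq, inner_sub_left, inner_smul_left, hvv, huv] at this
    simp at this
  have hwq : ⟪w, q⟫ = 0 := by
    simp only [hw, hq, inner_sub_right, inner_add_left, inner_smul_left, inner_smul_right, huu, hvv,
      huv, hvu]
    simp
  set D : Submodule ℝ (Euc n) := (Submodule.span ℝ {q})ᗮ with hD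
  have memD : ∀ x, x ∈ D ↔ ⟪x, q⟫ = 0 := fun x => by
    rw [hD, Submodule.mem_orthogonal_singleton_iff_inner_left]
  set P := AffineSubspace.mk' p D with hP
  have hPd : P.direction = D := AffineSubspace.direction_mk' p D
  have hpP : p ∈ P := AffineSubspace.self_mem_mk' p D
  have hPhyp : IsHyperplane P := by
    refine ⟨⟨p, hpP⟩, ?_⟩
    rw [hPd, hD]
    have h1 := Submodule.finrank_add_finrank_orthogonal (Submodule.span ℝ {q})
    rw [finrank_span_singleton hq0, finrank_euclideanSpace_fin] at h1
    omega
  have memP : ∀ x, x ∈ D → x + p ∈ P := fun x hx => by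
    have := AffineSubspace.vadd_mem_of_mem_direction (s := P) (hPd ▸ hx) hpP
    simpa using this
  obtain ⟨L, hLf, hLH, hLP, f, fi, ff, fP, fL, fK⟩ := hsec P hPhyp hpP
  -- direction of L
  set D0 : Submodule ℝ (Euc n) := (Submodule.span ℝ (Set.range ![u, v]))ᗮ with hD0
  have hor : Orthonormal ℝ ![u, v] := by
    rw [orthonormal_iff_ite]
    intro i j
    fin_cases i <;> fin_cases j <;> simp [huv, hvu, hu, hv]
  have hD0f : Module.finrank ℝ D0 = n - 2 := by
    have h1 := Submodule.finrank_add_finrank_orthogonal (Submodule.span ℝ (Set.range ![u, v]))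
    rw [finrank_span_eq_card hor.linearIndependent, finrank_euclideanSpace_fin] at h1
    simp only [Fintype.card_fin] at h1
    rw [hD0]
    omega
  have memD0 : ∀ x, x ∈ D0 ↔ ⟪x, u⟫ = 0 ∧ ⟪x, v⟫ = 0 := by
    intro x
    constructor
    · intro hx
      rw [hD0, Submodule.mem_orthogonal'] at hx
      exact ⟨hx u (Submodule.subset_span ⟨0, rfl⟩), hx v (Submodule.subset_span ⟨1, rfl⟩)⟩
    · rintro ⟨h1, h2⟩
      rw [hD0, Submodule.mem_orthogonal']
      intro y hy
      induction hy using Submodule.span_induction with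
      | mem y hy =>
        obtain ⟨i, rfl⟩ := hy
        fin_cases i <;> simp [h1, h2]
      | zero => simp
      | add a b _ _ ha hb => rw [inner_add_right, ha, hb, add_zero]
      | smul r a _ ha => rw [inner_smul_right, ha, mul_zero]
  have hLD : L.direction ≤ D := hPd ▸ AffineSubspace.direction_le hLP
  have hLD0 : L.direction = D0 := by
    apply Submodule.eq_of_le_of_finrank_eq
    · intro y hy
      have h1 := (hHd y).1 (hLH hy)
      have h2 := (memD y).1 (hLD hy)
      rw [hq, inner_sub_right, inner_smul_right, h1] at h2
      exact (memD0 y).2 ⟨h1, by linarith⟩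
    · rw [hLf, hD0f]
  have hLne : (L : Set (Euc n)).Nonempty := by
    rw [Set.nonempty_iff_ne_empty]
    intro h
    have : L = ⊥ := by
      apply SetLike.coe_injective; rw [h]; simp
    rw [this, AffineSubspace.direction_bot, finrank_bot] at hLf
    omega
  obtain ⟨o, ho⟩ := hLne
  have ffx : ∀ x, f (f x) = x := fun x => congrFun ff x
  let e : Euc n ≃ᵢ Euc n := IsometryEquiv.mk' f f ffx fi
  let g : Euc n ≃ᵃⁱ[ℝ] Euc n := e.toRealAffineIsometryEquiv
  have gf : ∀ x, g x = f x := fun x => rfl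
  set A := g.linearIsometryEquiv with hA
  have fadd : ∀ x y, f (x + y) = A x + f y := by
    intro x y
    have := g.map_vadd y x
    simpa [gf] using this
  have Lfix : ∀ x, x ∈ L → f x = x := by
    intro x hx
    have : x ∈ {x ∈ (P : Set (Euc n)) | f x = x} := by rw [fL]; exact hx
    exact this.2
  have hAL : ∀ y ∈ L.direction, A y = y := by
    intro y hy
    have h1 : y + o ∈ L := by simpa using AffineSubspace.vadd_mem_of_mem_direction hy ho
    have h2 := Lfix _ h1
    rw [fadd, Lfix o ho] at h2
    exact add_right_cancel h2
  have fPm : ∀ x, x ∈ P → f x ∈ P := by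
    intro x hx
    have : f x ∈ f '' (P : Set (Euc n)) := ⟨x, hx, rfl⟩
    rw [fP] at this; exact this
  have hAD : ∀ y ∈ D, A y ∈ D := by
    intro y hy
    have h1 := AffineSubspace.vsub_mem_direction (fPm _ (memP y hy)) (fPm _ hpP)
    rw [hPd, fadd] at h1
    simpa using h1
  have hAA : ∀ y, A (A y) = y := by
    intro y
    have h1 := ffx (y + f 0)
    rw [fadd, ffx, add_zero, ← add_zero (A y), fadd] at h1
    exact add_right_cancel h1
  have hoP : o ∈ P := hLP ho
  have hAw : A w = - w := by
    have hz1 : A (w + A w) = w + A w := by rw [map_add, hAA, add_comm]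
    have hzD : w + A w ∈ D := D.add_mem ((memD w).2 hwq) (hAD _ ((memD w).2 hwq))
    have hzL : w + A w ∈ L.direction := by
      have h1 : (w + A w) + o ∈ P := by
        simpa using AffineSubspace.vadd_mem_of_mem_direction (s := P) (hPd ▸ hzD) hoP
      have h2 : f ((w + A w) + o) = (w + A w) + o := by rw [fadd, hz1, Lfix o ho]
      have h3 : (w + A w) + o ∈ (L : Set (Euc n)) := by rw [← fL]; exact ⟨h1, h2⟩
      simpa using AffineSubspace.vsub_mem_direction h3 ho
    have hwL : ∀ y ∈ L.direction, ⟪w, y⟫ = 0 := by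
      intro y hy
      rw [hLD0, memD0] at hy
      rw [hw, real_inner_comm, inner_add_right, inner_smul_right, hy.1, hy.2]; simp
    have h0 : ⟪w + A w, w + A w⟫ = 0 := by
      rw [inner_add_left, hwL _ hzL, zero_add]
      nth_rewrite 1 [← hz1]
      rw [LinearIsometryEquiv.inner_map_map, hwL _ hzL]
    rw [inner_self_eq_zero] at h0
    exact (neg_eq_of_add_eq_zero_right h0).symm
  have hww : ⟪w, w⟫ = t ^ 2 + 1 := by
    simp only [hw, inner_add_right, inner_add_left, inner_smul_left, inner_smul_right, huu, hvv,
      huv, hvu]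
    simp; ring
  set c := ⟪o - p, w⟫ / (t ^ 2 + 1) with hc
  have hpos : (0:ℝ) < t ^ 2 + 1 := by positivity
  have hxo : (o - p - c • w) ∈ L.direction := by
    rw [hLD0, memD0]
    have h1 : ⟪o - p - c • w, w⟫ = 0 := by
      rw [inner_sub_left, inner_smul_left, hww, hc]
      simp only [conj_trivial]
      field_simp; ring
    have h2 : ⟪o - p - c • w, q⟫ = 0 := by
      have : o - p ∈ D := by
        have := AffineSubspace.vsub_mem_direction hoP hpP
        rw [hPd] at this; simpa using this
      rw [inner_sub_left, inner_smul_left, hwq, (memD _).1 this]; simp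
    generalize o - p - c • w = z at h1 h2 ⊢
    rw [hw, inner_add_right, inner_smul_right] at h1
    rw [hq, inner_sub_right, inner_smul_right] at h2
    have h3 : (t ^ 2 + 1) * ⟪z, u⟫ = 0 := by linear_combination h1 - t * h2
    have h4 : ⟪z, u⟫ = 0 := by
      rcases mul_eq_zero.1 h3 with h | h
      · exact absurd h hpos.ne'
      · exact h
    exact ⟨h4, by rw [h4] at h2; linarith⟩
  have ho' : p + c • w ∈ L := by
    have := AffineSubspace.vadd_mem_of_mem_direction (L.direction.neg_mem hxo) ho
    have h2 : -(o - p - c • w) +ᵥ o = p + c • w := by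
      rw [vadd_eq_add]; abel
    rwa [h2] at this
  refine ⟨2 * c, fun x hxu hxv s hs => ?_⟩
  have hxL : x ∈ L.direction := by rw [hLD0, memD0]; exact ⟨hxu, hxv⟩
  have h1 : f (p + x + s • w) = p + x + (2 * c - s) • w := by
    have : p + x + s • w = (x + (s - c) • w) + (p + c • w) := by module
    rw [this, fadd, Lfix _ ho', map_add, map_smul, hAw, hAL x hxL]
    module
  have h2 : p + x + s • w ∈ P := by
    have := memP (x + s • w) (D.add_mem (hLD hxL) (D.smul_mem s ((memD w).2 hwq)))
    have h3 : p + x + s • w = x + s • w + p := by abel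
    rwa [h3]
  have h3 : f (p + x + s • w) ∈ f '' ((P : Set (Euc n)) ∩ K) := ⟨_, ⟨h2, hs⟩, rfl⟩
  rw [fK, h1] at h3
  exact h3.2

theorem mkCfg {n : ℕ} (hn : 3 ≤ n) (K : Set (Euc n)) (hKc : IsCompact K) (hKx : Convex ℝ K)
    (Hd : Submodule ℝ (Euc n)) (hHf : Module.finrank ℝ Hd = n - 1) (u : Euc n)
    (hu : ‖u‖ = 1) (hHd : ∀ x, x ∈ Hd ↔ ⟪x, u⟫ = 0) (p : Euc n) (hp : p ∈ interior K)
    (hR : ∀ v : Euc n, ‖v‖ = 1 → ⟪v, u⟫ = 0 → ∀ t : ℝ,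
      ∃ c : ℝ, ∀ x : Euc n, ⟪x, u⟫ = 0 → ⟪x, v⟫ = 0 → ∀ s : ℝ,
      p + x + s • (t • v + u) ∈ K → p + x + (c - s) • (t • v + u) ∈ K)
    (hns : ¬ ∀ x ∈ Hd, ∀ s : ℝ, p + x + s • u ∈ K → p + x + (-s) • u ∈ K) :
    ∃ (l : ℝ) (C : Hd → ℝ → ℝ),
      Cfg {z : Hd × ℝ | p + (z.1 : Euc n) + (z.2 + l) • u ∈ K} l C := by
  have hpK : p ∈ K := interior_subset hp
  have huu : ⟪u, u⟫ = 1 := by rw [real_inner_self_eq_norm_sq, hu]; norm_num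
  have hex : ∀ y : Hd, ∃ w : Hd, ‖w‖ = 1 ∧ ⟪w, y⟫ = 0 :=
    fun y => Cfg.exists_orth (by omega) y
  have hR' : ∀ v : Hd, ‖v‖ = 1 → ∀ t : ℝ, ∃ c : ℝ, ∀ x : Hd, ⟪x, v⟫ = 0 → ∀ s : ℝ,
      p + x + s • (t • (v : Euc n) + u) ∈ K → p + x + (c - s) • (t • (v : Euc n) + u) ∈ K := by
    intro v hv t
    obtain ⟨c, hc⟩ := hR v hv ((hHd _).1 v.2) t
    exact ⟨c, fun x hx s hs => hc x ((hHd _).1 x.2) hx s hs⟩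
  choose! cc hcc using hR'
  -- the compact line section
  have hScl : IsCompact {s : ℝ | p + s • u ∈ K} := by
    have hcont : Continuous fun s : ℝ => p + s • u := by fun_prop
    have hu0 : u ≠ 0 := by intro h; rw [h] at hu; simp at hu
    rw [Metric.isCompact_iff_isClosed_bounded]
    refine ⟨hKc.isClosed.preimage hcont, ?_⟩
    obtain ⟨r, hr⟩ := hKc.isBounded.exists_norm_le
    rw [isBounded_iff_forall_norm_le]
    refine ⟨r + ‖p‖, fun s hs => ?_⟩
    have h1 := hr _ hs
    have h2 : s • u = (p + s • u) - p := by abel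
    have h3 : ‖s • u‖ = ‖s‖ := by rw [norm_smul, hu, mul_one]
    rw [← h3, h2]
    exact (norm_sub_le _ _).trans (by linarith)
  have hSne : {s : ℝ | p + s • u ∈ K}.Nonempty := ⟨0, by simpa using hpK⟩
  obtain ⟨m, hm, hml⟩ := hScl.exists_isLeast hSne
  obtain ⟨M, hM, hMl⟩ := hScl.exists_isGreatest hSne
  have hc0 : ∀ v : Hd, ‖v‖ = 1 → cc v 0 = m + M := by
    intro v hv
    have key : ∀ s : ℝ, p + s • u ∈ K → p + (cc v 0 - s) • u ∈ K := by
      intro s hs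
      have := hcc v hv 0 0 (by simp) s (by simpa using hs)
      simpa using this
    have h1 := hml (key M hM)
    have h2 := hMl (key m hm)
    linarith
  set l := (m + M) / 2 with hl
  have hsym : ∀ x : Hd, ∀ s : ℝ, p + x + s • u ∈ K → p + x + (2 * l - s) • u ∈ K := by
    intro x s hs
    obtain ⟨w, hw, hwx⟩ := hex x
    have := hcc w hw 0 x (by rw [real_inner_comm]; exact hwx) s (by simpa using hs)
    rw [hc0 w hw] at this
    have h2 : 2 * l = m + M := by rw [hl]; ring
    rw [h2]; simpa using this
  have hl0 : l ≠ 0 := by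
    intro h
    apply hns
    intro x hx s hs
    have := hsym ⟨x, hx⟩ s hs
    rw [h] at this
    simpa using this
  have hcont : Continuous fun z : Hd × ℝ => p + (z.1 : Euc n) + (z.2 + l) • u := by fun_prop
  refine ⟨l, fun v t => cc v t - 2 * l, ?_, ?_, ?_, ?_, hl0, ?_⟩
  · rw [Metric.isCompact_iff_isClosed_bounded]
    refine ⟨hKc.isClosed.preimage hcont, ?_⟩
    obtain ⟨r, hr⟩ := hKc.isBounded.exists_norm_le
    rw [isBounded_iff_forall_norm_le]
    refine ⟨r + ‖p‖ + |l|, fun z hz => ?_⟩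
    have h1 := hr _ hz
    have h2 : ‖(z.1 : Euc n) + (z.2 + l) • u‖ ≤ r + ‖p‖ := by
      have h2 : (z.1 : Euc n) + (z.2 + l) • u = (p + z.1 + (z.2 + l) • u) - p := by abel
      rw [h2]
      exact (norm_sub_le _ _).trans (by linarith)
    have hz1 : ⟪(z.1 : Euc n), u⟫ = 0 := (hHd _).1 z.1.2
    have h3 : ‖(z.1 : Euc n) + (z.2 + l) • u‖ ^ 2 = ‖z.1‖ ^ 2 + (z.2 + l) ^ 2 := by
      rw [norm_add_sq_real, inner_smul_right, hz1, norm_smul, hu]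
      simp
    have h0 : 0 ≤ r + ‖p‖ := (norm_nonneg _).trans h2
    rw [Prod.norm_def, max_le_iff]
    constructor
    · have := abs_le_of_sq_le_sq' (a := ‖z.1‖) (b := r + ‖p‖) (by
        nlinarith [norm_nonneg ((z.1 : Euc n) + (z.2 + l) • u), sq_nonneg (z.2 + l)]) h0
      have h5 := this.2
      linarith [abs_nonneg l]
    · have := abs_le_of_sq_le_sq' (a := z.2 + l) (b := r + ‖p‖) (by
        nlinarith [norm_nonneg ((z.1 : Euc n) + (z.2 + l) • u), sq_nonneg ‖z.1‖]) h0
      rw [Real.norm_eq_abs, abs_le]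
      constructor
      · linarith [this.1, le_abs_self l]
      · linarith [this.2, neg_abs_le l]
  · intro a ha b hb s t hs ht hst
    have := hKx ha hb hs ht hst
    have h2 : s • (p + (a.1 : Euc n) + (a.2 + l) • u) + t • (p + (b.1 : Euc n) + (b.2 + l) • u)
        = p + ((s • a + t • b).1 : Euc n) + ((s • a + t • b).2 + l) • u := by
      have : t = 1 - s := by linarith
      subst this
      simp only [Prod.fst_add, Prod.smul_fst, Prod.snd_add, Prod.smul_snd, Submodule.coe_add,
        Submodule.coe_smul, smul_eq_mul]
      module
    rw [h2] at this
    exact this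
  · have h1 : p + l • u ∈ interior K := by
      have h2 : p + (2 * l) • u ∈ K := by
        have := hsym 0 0 (by simpa using hpK)
        simpa using this
      have h3 := hKx.combo_interior_self_mem_interior hp h2 (a := 1 / 2) (b := 1 / 2)
        (by norm_num) (by norm_num) (by norm_num)
      have h4 : (1 / 2 : ℝ) • p + (1 / 2 : ℝ) • (p + (2 * l) • u) = p + l • u := by module
      rwa [h4] at h3
    have hop : IsOpen ((fun z : Hd × ℝ => p + (z.1 : Euc n) + (z.2 + l) • u) ⁻¹' interior K) :=
      isOpen_interior.preimage hcont
    refine interior_maximal ?_ hop ?_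
    · intro z hz; exact interior_subset (s := K) hz
    · simpa using h1
  · intro y k hk
    have := hsym y (k + l) hk
    have h2 : -k + l = 2 * l - (k + l) := by ring
    show p + (y : Euc n) + (-k + l) • u ∈ K
    rw [h2]; exact this
  · intro v hv t x k hx hk
    have hk' : p + ((x + (k + l) • (t • v) : Hd) : Euc n) + (k + l) • u ∈ K := hk
    have h1 := hcc v hv t x hx (k + l) (by
      convert hk' using 1
      simp only [Submodule.coe_add, Submodule.coe_smul]
      module)
    show p + ((x + ((cc v t - 2 * l - k) + l) • (t • v) : Hd) : Euc n)
      + ((cc v t - 2 * l - k) + l) • u ∈ K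
    convert h1 using 1
    simp only [Submodule.coe_add, Submodule.coe_smul]
    module

/-- Scaling by `a` along `u` and by `b` orthogonally to `u`. -/
def axScale {n : ℕ} (u : Euc n) (a b : ℝ) : Euc n →ₗ[ℝ] Euc n where
  toFun z := (a * ⟪u, z⟫) • u + b • (z - ⟪u, z⟫ • u)
  map_add' x y := by rw [inner_add_right]; module
  map_smul' r x := by
    rw [inner_smul_right]; simp only [RingHom.id_apply]; module

theorem axScale_apply {n : ℕ} (u : Euc n) (a b : ℝ) (z : Euc n) :
    axScale u a b z = (a * ⟪u, z⟫) • u + b • (z - ⟪u, z⟫ • u) := rfl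

theorem axScale_inner {n : ℕ} (u : Euc n) (hu : ‖u‖ = 1) (a b : ℝ) (z : Euc n) :
    ⟪u, axScale u a b z⟫ = a * ⟪u, z⟫ := by
  have huu : ⟪u, u⟫ = 1 := by rw [real_inner_self_eq_norm_sq, hu]; norm_num
  rw [axScale_apply, inner_add_right, inner_smul_right, inner_smul_right, inner_sub_right,
    inner_smul_right, huu]
  ring

theorem axScale_inv {n : ℕ} (u : Euc n) (hu : ‖u‖ = 1) (a b a' b' : ℝ) (ha : a * a' = 1)
    (hb : b * b' = 1) (z : Euc n) : axScale u a b (axScale u a' b' z) = z := by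
  rw [axScale_apply, axScale_inner u hu, axScale_apply]
  have : (a * (a' * ⟪u, z⟫)) • u
      + b • ((a' * ⟪u, z⟫) • u + b' • (z - ⟪u, z⟫ • u) - (a' * ⟪u, z⟫) • u)
      = ((a * a') * ⟪u, z⟫) • u + (b * b') • (z - ⟪u, z⟫ • u) := by module
  rw [this, ha, hb]; module

theorem axScale_normsq {n : ℕ} (u : Euc n) (hu : ‖u‖ = 1) (a b : ℝ) (z : Euc n) :
    ‖axScale u a b z‖ ^ 2 = a ^ 2 * ⟪z, u⟫ ^ 2 + b ^ 2 * (‖z‖ ^ 2 - ⟪z, u⟫ ^ 2) := by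
  have huu : ⟪u, u⟫ = 1 := by rw [real_inner_self_eq_norm_sq, hu]; norm_num
  rw [← real_inner_self_eq_norm_sq, ← real_inner_self_eq_norm_sq, axScale_apply]
  simp only [inner_add_left, inner_add_right, inner_sub_left, inner_sub_right, inner_smul_left,
    inner_smul_right, huu, conj_trivial, real_inner_comm u z]
  ring

theorem ellipsoid_of_eq {n : ℕ} (K : Set (Euc n)) (u o : Euc n) (hu : ‖u‖ = 1) (γ α : ℝ)
    (hγ : 0 < γ) (hα : 0 < α)
    (h : ∀ z, z ∈ K ↔ ⟪z - o, u⟫ ^ 2 + γ * (‖z - o‖ ^ 2 - ⟪z - o, u⟫ ^ 2) ≤ α) :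
    IsEllipsoidOfDim n K := by
  have hαγ : 0 < α / γ := div_pos hα hγ
  have ha : √α ≠ 0 := (Real.sqrt_pos.2 hα).ne'
  have hb : √(α / γ) ≠ 0 := (Real.sqrt_pos.2 hαγ).ne'
  let S : Euc n ≃ₗ[ℝ] Euc n := LinearEquiv.ofLinearMap (axScale u √α √(α / γ))
    (axScale u (√α)⁻¹ (√(α / γ))⁻¹)
    (LinearMap.ext fun z => axScale_inv u hu _ _ _ _ (mul_inv_cancel₀ ha) (mul_inv_cancel₀ hb) z)
    (LinearMap.ext fun z => axScale_inv u hu _ _ _ _ (inv_mul_cancel₀ ha) (inv_mul_cancel₀ hb) z)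
  have hSs : ∀ z, S.symm z = axScale u (√α)⁻¹ (√(α / γ))⁻¹ z := fun z => rfl
  refine ⟨S.toAffineEquiv.trans (AffineEquiv.constVAdd ℝ _ o), ⊤, ?_, ?_⟩
  · simp
  have hT : ∀ x, (S.toAffineEquiv.trans (AffineEquiv.constVAdd ℝ _ o)) x = o + S x := fun x => by
    simp
  have key : ∀ z, z ∈ K ↔ ‖S.symm (z - o)‖ ≤ 1 := by
    intro z
    rw [h, hSs, ← sq_le_one_iff₀ (norm_nonneg _), axScale_normsq u hu, inv_pow, inv_pow,
      Real.sq_sqrt hα.le, Real.sq_sqrt hαγ.le]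
    have : α⁻¹ * ⟪z - o, u⟫ ^ 2 + (α / γ)⁻¹ * (‖z - o‖ ^ 2 - ⟪z - o, u⟫ ^ 2)
        = (⟪z - o, u⟫ ^ 2 + γ * (‖z - o‖ ^ 2 - ⟪z - o, u⟫ ^ 2)) / α := by
      field_simp
    rw [this, div_le_one hα]
  ext z
  rw [key]
  constructor
  · intro hz
    refine ⟨S.symm (z - o), ⟨by simpa using hz, trivial⟩, ?_⟩
    rw [hT]; simp
  · rintro ⟨x, ⟨hx, -⟩, rfl⟩
    rw [hT]
    simpa using hx

theorem rot_of_eq {n : ℕ} (K : Set (Euc n)) (u o : Euc n) (γ α : ℝ)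
    (h : ∀ z, z ∈ K ↔ ⟪z - o, u⟫ ^ 2 + γ * (‖z - o‖ ^ 2 - ⟪z - o, u⟫ ^ 2) ≤ α)
    (f : Euc n ≃ᵃⁱ[ℝ] Euc n) (h1 : f o = o) (h2 : f (o + u) = o + u) : f '' K = K := by
  have hA : ∀ z, f z - o = f.linearIsometryEquiv (z - o) := by
    intro z
    have := f.map_vsub z o
    rw [h1] at this
    exact this.symm
  have hAu : f.linearIsometryEquiv u = u := by
    have := hA (o + u)
    rw [h2] at this
    simpa using this.symm
  have hin : ∀ z, ⟪f z - o, u⟫ = ⟪z - o, u⟫ := by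
    intro z
    rw [hA]
    nth_rewrite 1 [← hAu]
    exact f.linearIsometryEquiv.inner_map_map _ _
  have hno : ∀ z, ‖f z - o‖ = ‖z - o‖ := by
    intro z
    rw [hA]; exact f.linearIsometryEquiv.norm_map _
  have hm : ∀ z, f z ∈ K ↔ z ∈ K := by
    intro z; rw [h, h, hin, hno]
  ext z
  constructor
  · rintro ⟨x, hx, rfl⟩
    exact (hm x).2 hx
  · intro hz
    obtain ⟨x, rfl⟩ := f.surjective z
    exact ⟨x, (hm x).1 hz, rfl⟩

theorem refl_symm {n : ℕ} (K : Set (Euc n)) (Hd : Submodule ℝ (Euc n)) (u : Euc n)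
    (hu : ‖u‖ = 1) (hHd : ∀ x, x ∈ Hd ↔ ⟪x, u⟫ = 0) (p : Euc n)
    (h : ∀ x ∈ Hd, ∀ s : ℝ, p + x + s • u ∈ K → p + x + (-s) • u ∈ K) :
    IsSymmetryPlane K (AffineSubspace.mk' p Hd) := by
  have huu : ⟪u, u⟫ = 1 := by rw [real_inner_self_eq_norm_sq, hu]; norm_num
  have hu0 : u ≠ 0 := by intro h; rw [h] at hu; simp at hu
  let f : Euc n → Euc n := fun x => x - (2 * ⟪x - p, u⟫) • u
  have hf : ∀ x, f x = x - (2 * ⟪x - p, u⟫) • u := fun x => rfl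
  have hff : ∀ x, f (f x) = x := by
    intro x
    have : ⟪f x - p, u⟫ = - ⟪x - p, u⟫ := by
      rw [hf, sub_right_comm, inner_sub_left, inner_smul_left, huu, conj_trivial]; ring
    rw [hf (f x), this, hf]; module
  have hfK : ∀ x ∈ K, f x ∈ K := by
    intro x hx
    have h1 : x - p - ⟪x - p, u⟫ • u ∈ Hd := by
      rw [hHd, inner_sub_left, inner_smul_left, huu, conj_trivial]; ring
    have h2 := h _ h1 ⟪x - p, u⟫ (by convert hx using 1; abel)
    convert h2 using 1
    rw [hf]; module
  refine ⟨f, ⟨?_, funext hff, ?_⟩, ?_⟩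
  · apply Isometry.of_dist_eq
    intro x y
    rw [dist_eq_norm, dist_eq_norm]
    have h1 : f x - f y = (x - y) - (2 * ⟪x - y, u⟫) • u := by
      have : ⟪x - y, u⟫ = ⟪x - p, u⟫ - ⟪y - p, u⟫ := by
        rw [← inner_sub_left, sub_sub_sub_cancel_right]
      rw [hf, hf, this]; module
    rw [h1, ← sq_eq_sq₀ (norm_nonneg _) (norm_nonneg _), norm_sub_sq_real, inner_smul_right,
      norm_smul, hu, mul_one, Real.norm_eq_abs, sq_abs]
    ring
  · ext x
    rw [SetLike.mem_coe, AffineSubspace.mem_mk', vsub_eq_sub, hHd, mem_ofPred_eq, hf, sub_eq_self,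
      smul_eq_zero]
    simp [hu0]
  · ext x
    constructor
    · rintro ⟨y, hy, rfl⟩; exact hfK y hy
    · intro hx; exact ⟨f x, hfK x hx, hff x⟩

theorem final_main {n : ℕ} (hn : 3 ≤ n) (K : Set (Euc n)) (hK : IsConvexBody K)
    (H : AffineSubspace ℝ (Euc n)) (hH : IsHyperplane H)
    (p : Euc n) (hp : p ∈ interior K)
    (hnotsym : ∀ H' : AffineSubspace ℝ (Euc n), H'.direction = H.direction →
      IsSymmetryPlane K H' → p ∉ H')
    (hsec : ∀ P : AffineSubspace ℝ (Euc n), IsHyperplane P → p ∈ P →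
      ∃ L : AffineSubspace ℝ (Euc n), Module.finrank ℝ L.direction = n - 2 ∧
        L.direction ≤ H.direction ∧ IsSectionSymmPlane K P L) :
    ∃ L : AffineSubspace ℝ (Euc n), (L : Set (Euc n)).Nonempty ∧
      L.direction = H.directionᗮ ∧ IsEllipsoidOfDim n K ∧
      ∀ f : Euc n ≃ᵃⁱ[ℝ] Euc n, IsRotationAbout f L → f '' K = K := by
  obtain ⟨hKc, hKx, -⟩ := hK
  have hHf := hH.2
  generalize H.direction = Hd at *
  have hof : Module.finrank ℝ Hdᗮ = 1 := by
    have h1 := Submodule.finrank_add_finrank_orthogonal Hd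
    rw [hHf, finrank_euclideanSpace_fin] at h1
    omega
  obtain ⟨u, hu⟩ : ∃ u : Hdᗮ, ‖u‖ = 1 := by
    have : Nontrivial Hdᗮ := Module.nontrivial_of_finrank_pos (R := ℝ) (by omega)
    exact exists_norm_eq _ zero_le_one
  obtain ⟨u, huo⟩ := u
  have hu : ‖u‖ = 1 := hu
  have hu0 : u ≠ 0 := by intro h; rw [h] at hu; simp at hu
  have huu : ⟪u, u⟫ = 1 := by rw [real_inner_self_eq_norm_sq, hu]; norm_num
  have hspan : Submodule.span ℝ {u} = Hdᗮ := by
    apply Submodule.eq_of_le_of_finrank_eq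
    · rw [Submodule.span_singleton_le_iff_mem]; exact huo
    · rw [finrank_span_singleton hu0, hof]
  have hHd : ∀ x, x ∈ Hd ↔ ⟪x, u⟫ = 0 := by
    intro x
    rw [← Submodule.mem_orthogonal_singleton_iff_inner_left, hspan,
      Submodule.orthogonal_orthogonal]
  have hR := lemR hn K Hd u hu hHd p hsec
  obtain ⟨l, C, hcfg⟩ := mkCfg hn K hKc hKx Hd hHf u hu hHd p hp hR (by
    intro h
    exact hnotsym _ (AffineSubspace.direction_mk' p Hd) (refl_symm K Hd u hu hHd p h)
      (AffineSubspace.self_mem_mk' p Hd))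
  obtain ⟨α, γ, B, hα, hγ, hB⟩ := hcfg.core (by omega)
  set b : Hd := (InnerProductSpace.toDual ℝ Hd).symm B with hb
  have hBb : ∀ y, B y = ⟪b, y⟫ := fun y => by
    rw [hb, InnerProductSpace.toDual_symm_apply]
  set a : Hd := (2 * γ)⁻¹ • b with ha
  have hBa : ∀ y, B y = 2 * γ * ⟪a, y⟫ := fun y => by
    have h1 : ⟪a, y⟫ = (2 * γ)⁻¹ * ⟪b, y⟫ := real_inner_smul_left b y _
    rw [hBb, h1]; field_simp
  set o : Euc n := p + l • u + a with ho
  have hau : ⟪(a : Euc n), u⟫ = 0 := (hHd _).1 a.2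
  have memK : ∀ z, z ∈ K ↔ ⟪z - o, u⟫ ^ 2 + γ * (‖z - o‖ ^ 2 - ⟪z - o, u⟫ ^ 2)
      ≤ α + γ * ‖a‖ ^ 2 := by
    intro z
    set k := ⟪z - o, u⟫ with hk
    have hyH : z - o - k • u + a ∈ Hd := by
      rw [hHd, inner_add_left, inner_sub_left, inner_smul_left, huu, hau, ← hk, conj_trivial]
      ring
    set y : Hd := ⟨_, hyH⟩ with hy
    have hyc : (y : Euc n) = z - o - k • u + a := rfl
    have h1 := hB y k
    have h2 : z = p + (y : Euc n) + (k + l) • u := by rw [hyc, ho]; module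
    have h3 : z ∈ K ↔ k ^ 2 ≤ α + B y - γ * ‖y‖ ^ 2 := by
      rw [← h1, mem_ofPred_eq, ← h2]
    have h4 : ‖z - o‖ ^ 2 = ‖y - a‖ ^ 2 + k ^ 2 := by
      have h5 : z - o = ((y - a : Hd) : Euc n) + k • u := by
        rw [Submodule.coe_sub, hyc]; abel
      have h6 : ⟪((y - a : Hd) : Euc n), u⟫ = 0 := (hHd _).1 (y - a).2
      rw [h5, norm_add_sq_real, inner_smul_right, h6, norm_smul, hu, mul_one, Real.norm_eq_abs,
        sq_abs, Submodule.coe_norm]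
      ring
    rw [h3, h4, norm_sub_sq_real, hBa, real_inner_comm y a]
    constructor <;> intro h <;> linarith
  have hα' : 0 < α + γ * ‖a‖ ^ 2 := by positivity
  refine ⟨AffineSubspace.mk' o Hdᗮ, ⟨o, AffineSubspace.self_mem_mk' _ _⟩,
    AffineSubspace.direction_mk' _ _, ellipsoid_of_eq K u o hu γ _ hγ hα' memK, ?_⟩
  intro f hf
  refine rot_of_eq K u o γ _ memK f (hf.1 o (AffineSubspace.self_mem_mk' _ _)) (hf.1 _ ?_)
  rw [AffineSubspace.mem_mk', vsub_eq_sub, add_sub_cancel_left]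
  exact huo

end helpers

/-- Main theorem: a Larman point `p` that is not a revolution point,
not on a hyperplane of symmetry of `K` parallel to `H`, with all hyperplane sections
through `p` having an `(n-2)`-plane of symmetry parallel to `H`, forces `K` to be an
ellipsoid of revolution with axis perpendicular to `H`. -/
theorem stmt16 {n : ℕ} (hn : 3 ≤ n) (K : Set (Euc n)) (hK : IsConvexBody K)
    (H : AffineSubspace ℝ (Euc n)) (hH : IsHyperplane H)
    (p : Euc n) (hp : p ∈ interior K)
    (hLarman : IsLarmanPoint K p) (hnotrev : ¬ IsRevolutionPoint K p)
    (hnotsym : ∀ H' : AffineSubspace ℝ (Euc n), H'.direction = H.direction →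
      IsSymmetryPlane K H' → p ∉ H')
    (hsec : ∀ P : AffineSubspace ℝ (Euc n), IsHyperplane P → p ∈ P →
      ∃ L : AffineSubspace ℝ (Euc n), Module.finrank ℝ L.direction = n - 2 ∧
        L.direction ≤ H.direction ∧ IsSectionSymmPlane K P L) :
    ∃ L : AffineSubspace ℝ (Euc n), (L : Set (Euc n)).Nonempty ∧
      L.direction = H.directionᗮ ∧ IsEllipsoidOfDim n K ∧
      ∀ f : Euc n ≃ᵃⁱ[ℝ] Euc n, IsRotationAbout f L → f '' K = K := by
  exact final_main hn K hK H hH p hp hnotsym hsec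
end
end

section
/- Let K ⊂ ℝ^3 be a convex body with a plane of symmetry H, symmetric under reflection S across H, and let p be an interior point with p ∉ H, q = S(p). Suppose every plane section of K through p and every plane section through q has a line of symmetry parallel to H, and the boundary of K contains no segment parallel to H. Then for every line Γ ⊂ H, the shadow boundary S∂(K,Γ) is contained in a plane Δ orthogonal to Γ. -/
noncomputable section

open Metric Set MeasureTheory

/-- Open-line form of the shadow boundary. -/
def SBset (K : Set (Euc 3)) (g : Euc 3) : Set (Euc 3) :=
  {x | x ∈ K ∧ ∀ t : ℝ, x + t • g ∉ interior K}

lemma combo_int {K : Set (Euc 3)} (hK : Convex ℝ K) {c y : Euc 3} (hc : c ∈ interior K)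
    (hy : y ∈ K) {t : ℝ} (h0 : 0 ≤ t) (h1 : t < 1) : c + t • (y - c) ∈ interior K := by
  have := hK.combo_interior_self_mem_interior hc hy (a := 1 - t) (b := t) (by linarith) h0
    (by ring)
  convert this using 1
  module

lemma small_int {K : Set (Euc 3)} {c : Euc 3} (hc : c ∈ interior K) (d : Euc 3) :
    ∃ ε : ℝ, 0 < ε ∧ c - ε • d ∈ K := by
  have hcont : Continuous (fun t : ℝ => c - t • d) := by fun_prop
  have hU : IsOpen ((fun t : ℝ => c - t • d) ⁻¹' interior K) := isOpen_interior.preimage hcont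
  have h0 : (0 : ℝ) ∈ ((fun t : ℝ => c - t • d) ⁻¹' interior K) := by simpa using hc
  obtain ⟨ε, hε, hb⟩ := Metric.isOpen_iff.1 hU 0 h0
  refine ⟨ε / 2, by linarith, ?_⟩
  have : ε / 2 ∈ ball (0 : ℝ) ε := by
    rw [mem_ball, Real.dist_eq, sub_zero, abs_of_pos (by linarith)]; linarith
  exact interior_subset (hb this)

lemma stepA {K : Set (Euc 3)} (hK : Convex ℝ K) (V : Submodule ℝ (Euc 3))
    (c : Euc 3) (hc : c ∈ interior K)
    (hsec : ∀ P : AffineSubspace ℝ (Euc 3), IsHyperplane P → c ∈ P →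
      ∃ L : AffineSubspace ℝ (Euc 3), Module.finrank ℝ L.direction = 1 ∧
        L.direction ≤ V ∧ IsSectionSymmPlane K P L)
    (g : Euc 3) (hg : inner ℝ g g = 1) (hgV : g ∈ V)
    (x : Euc 3) (hx : x ∈ SBset K g) (hxV : x - c ∉ V) :
    ∃ x' ∈ SBset K g, inner ℝ g x' = inner ℝ g x ∧
      ∃ s r : ℝ, 0 < s ∧ x' - c = -s • (x - c) + r • g := by
  obtain ⟨a1, ha1⟩ : ∃ a1 : ℝ, a1 = inner ℝ g (x - c) := ⟨_, rfl⟩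
  obtain ⟨d, hd⟩ : ∃ d : Euc 3, d = (x - c) - a1 • g := ⟨_, rfl⟩
  have hxd : x = c + a1 • g + (1 : ℝ) • d := by rw [hd]; module
  have hgd : inner ℝ g d = 0 := by
    rw [hd, inner_sub_right, inner_smul_right, hg, ha1]; ring
  have hdV : d ∉ V := by
    intro h
    apply hxV
    have : x - c = d + a1 • g := by rw [hd]; module
    rw [this]
    exact V.add_mem h (V.smul_mem _ hgV)
  have hg0 : g ≠ 0 := by rintro rfl; simp at hg
  have hd0 : d ≠ 0 := by rintro rfl; exact hdV V.zero_mem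
  have hdd : 0 < inner ℝ d d := real_inner_self_pos.2 hd0
  have hli : LinearIndependent ℝ ![g, d] := by
    rw [LinearIndependent.pair_iff]
    intro s t hst
    have h1 : inner ℝ g (s • g + t • d) = 0 := by rw [hst]; simp
    rw [inner_add_right, inner_smul_right, inner_smul_right, hg, hgd] at h1
    have hs : s = 0 := by linarith
    subst hs
    refine ⟨rfl, ?_⟩
    simpa [hd0] using hst
  let P : AffineSubspace ℝ (Euc 3) := AffineSubspace.mk' c (Submodule.span ℝ {g, d})
  have hPd : P.direction = Submodule.span ℝ {g, d} := AffineSubspace.direction_mk' _ _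
  have hcP : c ∈ P := AffineSubspace.self_mem_mk' _ _
  have memP : ∀ y, y ∈ P ↔ ∃ a b : ℝ, y = c + a • g + b • d := by
    intro y
    rw [AffineSubspace.mem_mk', Submodule.mem_span_pair]
    constructor
    · rintro ⟨a, b, h⟩
      refine ⟨a, b, ?_⟩
      rw [add_assoc, h]; simp
    · rintro ⟨a, b, h⟩
      refine ⟨a, b, ?_⟩
      rw [h, vsub_eq_sub]; module
  have hP : IsHyperplane P := by
    refine ⟨⟨c, hcP⟩, ?_⟩
    rw [hPd]
    have := finrank_span_eq_card hli
    have hr : range ![g, d] = {g, d} := by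
      ext y
      rw [mem_range, Fin.exists_fin_two, mem_insert_iff, mem_singleton_iff]
      exact ⟨fun h => h.imp Eq.symm Eq.symm, fun h => h.imp Eq.symm Eq.symm⟩
    rw [hr] at this
    rw [this]; rfl
  obtain ⟨L, hL1, hLV, hLP, f, hfi, hff, hfP, hfix, hfs⟩ := hsec P hP hcP
  have hLne : (L : Set (Euc 3)).Nonempty := by
    rw [AffineSubspace.nonempty_iff_ne_bot]
    intro hbot
    rw [hbot, AffineSubspace.direction_bot, finrank_bot] at hL1
    exact absurd hL1 (by norm_num)
  obtain ⟨l0, hl0⟩ := hLne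
  obtain ⟨a0, b0, hl0e⟩ := (memP l0).1 (hLP hl0)
  have hgL : g ∈ L.direction := by
    have hnt : L.direction ≠ ⊥ := by
      intro h; rw [h] at hL1; simp at hL1
    obtain ⟨u, hu, hu0⟩ := Submodule.exists_mem_ne_zero_of_ne_bot hnt
    have huP := AffineSubspace.direction_le hLP hu
    rw [hPd, Submodule.mem_span_pair] at huP
    obtain ⟨a, b, hab⟩ := huP
    have huV := hLV hu
    have hb : b = 0 := by
      by_contra hb
      apply hdV
      have h2 : b • d ∈ V := by
        have : b • d = u - a • g := by rw [← hab]; module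
        rw [this]
        exact V.sub_mem huV (V.smul_mem _ hgV)
      exact (V.smul_mem_iff hb).1 h2
    subst hb
    have ha : a ≠ 0 := by
      rintro rfl
      apply hu0; rw [← hab]; simp
    have : a • g ∈ L.direction := by
      have h3 : a • g = u := by rw [← hab]; module
      rw [h3]; exact hu
    exact (L.direction.smul_mem_iff ha).1 this
  have hLs : ∀ s : ℝ, c + s • g + b0 • d ∈ L := by
    intro s
    have := AffineSubspace.vadd_mem_of_mem_direction (L.direction.smul_mem (s - a0) hgL) hl0
    convert this using 1
    rw [hl0e, vadd_eq_add]; module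
  have hLfix : ∀ s : ℝ, f (c + s • g + b0 • d) = c + s • g + b0 • d := by
    intro s
    have : c + s • g + b0 • d ∈ {x ∈ (P : Set (Euc 3)) | f x = x} := by
      rw [hfix]; exact hLs s
    exact this.2
  have hdist : ∀ a b a' b' : ℝ, dist (c + a • g + b • d) (c + a' • g + b' • d) ^ 2 =
      (a - a') ^ 2 + (b - b') ^ 2 * inner ℝ d d := by
    intro a b a' b'
    have : c + a • g + b • d - (c + a' • g + b' • d) = (a - a') • g + (b - b') • d := by module
    rw [dist_eq_norm, this, ← real_inner_self_eq_norm_sq]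
    simp only [inner_add_left, inner_add_right, inner_smul_left, inner_smul_right, hg, hgd,
      real_inner_comm g d]
    simp
    ring
  have hf : ∀ a b : ℝ, f (c + a • g + b • d) = c + a • g + (2 * b0 - b) • d := by
    intro a b
    have hyP : f (c + a • g + b • d) ∈ (P : Set (Euc 3)) := by
      rw [← hfP]
      exact ⟨_, (memP _).2 ⟨a, b, rfl⟩, rfl⟩
    obtain ⟨a', b', hab⟩ := (memP _).1 hyP
    have key : ∀ s : ℝ, (a' - s) ^ 2 + (b' - b0) ^ 2 * inner ℝ d d =
        (a - s) ^ 2 + (b - b0) ^ 2 * inner ℝ d d := by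
      intro s
      rw [← hdist, ← hdist, ← hab]
      conv_lhs => rw [← hLfix s]
      rw [hfi.dist_eq]
    have k0 := key 0
    have k1 := key 1
    have haa : a' = a := by linarith
    subst haa
    have hbb : (b' - b0) ^ 2 = (b - b0) ^ 2 := by
      have : (b' - b0) ^ 2 * inner ℝ d d = (b - b0) ^ 2 * inner ℝ d d := by linarith
      exact mul_right_cancel₀ hdd.ne' this
    rw [hab]
    rcases sq_eq_sq_iff_eq_or_eq_neg.1 hbb with h | h
    · have hb' : b' = b := by linarith
      subst hb'
      have hmem : c + a' • g + b' • d ∈ (L : Set (Euc 3)) := by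
        rw [← hfix]
        exact ⟨(memP _).2 ⟨_, _, rfl⟩, hab⟩
      have hdir := AffineSubspace.vsub_mem_direction hmem (hLs a')
      have h4 : (b' - b0) • d ∈ V := by
        have := hLV hdir
        convert this using 1
        rw [vsub_eq_sub]; module
      have h5 : b' - b0 = 0 := by
        by_contra h6
        exact hdV ((V.smul_mem_iff h6).1 h4)
      have : 2 * b0 - b' = b' := by linarith
      rw [this]
    · have : 2 * b0 - b = b' := by linarith
      rw [this]
  have hfK : ∀ a b : ℝ, c + a • g + b • d ∈ K → c + a • g + (2 * b0 - b) • d ∈ K := by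
    intro a b h
    have : f (c + a • g + b • d) ∈ (P : Set (Euc 3)) ∩ K := by
      rw [← hfs]
      exact ⟨_, ⟨(memP _).2 ⟨a, b, rfl⟩, h⟩, rfl⟩
    rw [hf] at this
    exact this.2
  have claim1 : ∀ a b : ℝ, c + a • g + b • d ∈ K → b ≤ 1 := by
    intro a b h
    by_contra hb
    push Not at hb
    have hb0 : 0 < b := by linarith
    have h7 := combo_int hK hc h (t := b⁻¹) (by positivity) (inv_lt_one_of_one_lt₀ hb)
    apply hx.2 (b⁻¹ * a - a1)
    convert h7 using 1
    have h8 : b⁻¹ • (c + a • g + b • d - c) = (b⁻¹ * a) • g + (b⁻¹ * b) • d := by module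
    rw [h8, inv_mul_cancel₀ hb0.ne']
    nth_rewrite 1 [hxd]
    module
  obtain ⟨ε, hε, hεK⟩ := small_int hc d
  have h9 : 2 * b0 + ε ≤ 1 := by
    have := hfK 0 (-ε) (by convert hεK using 1; module)
    have := claim1 _ _ this
    linarith
  refine ⟨c + a1 • g + (2 * b0 - 1) • d, ⟨?_, ?_⟩, ?_, 1 - 2 * b0, a1 + (1 - 2 * b0) * a1,
    by linarith, ?_⟩
  · apply hfK
    rw [← hxd]; exact hx.1
  · intro t ht
    obtain ⟨δ, hδ, hδK⟩ := small_int ht d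
    have := hfK (a1 + t) (2 * b0 - 1 - δ) (by convert hδK using 1; module)
    have := claim1 _ _ this
    linarith
  · rw [congrArg (inner ℝ g) hxd]
    simp only [inner_add_right, inner_smul_right, hgd]
    ring
  · nth_rewrite 1 [hd]
    module

lemma sb_compact {K : Set (Euc 3)} (hK : IsCompact K) (g : Euc 3) : IsCompact (SBset K g) := by
  have : SBset K g = K ∩ ⋂ t : ℝ, ((fun x => x + t • g) ⁻¹' (interior K))ᶜ := by
    ext x; simp [SBset]
  rw [this]
  apply hK.inter_right
  apply isClosed_iInter
  intro t
  have hcont : Continuous (fun x : Euc 3 => x + t • g) := by fun_prop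
  exact (isOpen_interior.preimage hcont).isClosed_compl

/-- Dynamics: a compact set invariant under both chord maps meets the upper half of the axis. -/
lemma dyn (E : Set (Euc 3)) (hE : IsCompact E) (hne : E.Nonempty) (p q g w n : Euc 3) (h : ℝ)
    (hh : 0 < h) (hgw : inner ℝ w g = 0) (hgn : inner ℝ n g = 0)
    (hp : inner ℝ n (p - q) = 2 * h) (hpw : inner ℝ w (p - q) = 0)
    (Ap : ∀ x ∈ E, inner ℝ n (x - p) ≠ 0 → ∃ x' ∈ E, ∃ s r : ℝ, 0 < s ∧
      x' - p = -s • (x - p) + r • g)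
    (Aq : ∀ x ∈ E, inner ℝ n (x - q) ≠ 0 → ∃ x' ∈ E, ∃ s r : ℝ, 0 < s ∧
      x' - q = -s • (x - q) + r • g) :
    ∃ y ∈ E, h ≤ inner ℝ n (y - q) ∧ inner ℝ w (y - q) = 0 := by
  -- coordinates relative to q
  have Ap' : ∀ x ∈ E, inner ℝ n (x - q) ≠ 2 * h → ∃ x' ∈ E, ∃ s : ℝ, 0 < s ∧
      inner ℝ n (x' - q) = 2 * h - s * (inner ℝ n (x - q) - 2 * h) ∧
      inner ℝ w (x' - q) = - s * inner ℝ w (x - q) := by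
    intro x hx hz
    have e : ∀ y : Euc 3, y - q = (y - p) + (p - q) := fun y => by abel
    have hz' : inner ℝ n (x - p) ≠ 0 := by
      intro h0; apply hz
      rw [e x, inner_add_right, h0, hp]; ring
    obtain ⟨x', hx', s, r, hs, hr⟩ := Ap x hx hz'
    refine ⟨x', hx', s, hs, ?_, ?_⟩
    · rw [e x', e x, hr]
      simp only [inner_add_right, inner_smul_right, hgn, hp]; ring
    · rw [e x', e x, hr]
      simp only [inner_add_right, inner_smul_right, hgw, hpw]; ring
  have Aq' : ∀ x ∈ E, inner ℝ n (x - q) ≠ 0 → ∃ x' ∈ E, ∃ s : ℝ, 0 < s ∧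
      inner ℝ n (x' - q) = - s * inner ℝ n (x - q) ∧
      inner ℝ w (x' - q) = - s * inner ℝ w (x - q) := by
    intro x hx hz
    obtain ⟨x', hx', s, r, hs, hr⟩ := Aq x hx hz
    refine ⟨x', hx', s, hs, ?_, ?_⟩
    · rw [hr]; simp only [inner_add_right, inner_smul_right, hgn]; ring
    · rw [hr]; simp only [inner_add_right, inner_smul_right, hgw]; ring
  let F : Set (Euc 3) := E ∩ {x | h ≤ inner ℝ n (x - q)}
  have hFc : IsCompact F := by
    apply hE.inter_right
    exact isClosed_le continuous_const (by fun_prop)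
  have hFne : F.Nonempty := by
    obtain ⟨x, hx⟩ := hne
    by_cases hxz : h ≤ inner ℝ n (x - q)
    · exact ⟨x, hx, hxz⟩
    · push Not at hxz
      obtain ⟨x', hx', s, hs, h1, h2⟩ := Ap' x hx (by linarith)
      refine ⟨x', hx', ?_⟩
      simp only [mem_ofPred_eq]
      nlinarith
  have hcont : ContinuousOn (fun x : Euc 3 => |inner ℝ w (x - q)| / inner ℝ n (x - q)) F := by
    apply ContinuousOn.div
    · fun_prop
    · fun_prop
    · intro x hx
      have : h ≤ inner ℝ n (x - q) := hx.2
      linarith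
  obtain ⟨y, hyF, hmin⟩ := hFc.exists_isMinOn hFne hcont
  have hyz : h ≤ inner ℝ n (y - q) := hyF.2
  refine ⟨y, hyF.1, hyz, ?_⟩
  by_contra hw
  obtain ⟨y', hy', s, hs, h1, h2⟩ := Aq' y hyF.1 (by linarith)
  have hneg : inner ℝ n (y' - q) < 0 := by rw [h1]; nlinarith
  obtain ⟨y'', hy'', t, ht, h3, h4⟩ := Ap' y' hy' (by linarith)
  have hy''F : y'' ∈ F := by
    refine ⟨hy'', ?_⟩
    simp only [mem_ofPred_eq]
    nlinarith
  have hle := hmin hy''F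
  simp only [mem_ofPred_eq] at hle
  have hWW : inner ℝ w (y'' - q) = (t * s) * inner ℝ w (y - q) := by rw [h4, h2]; ring
  have hZZ : inner ℝ n (y'' - q) = 2 * h + 2 * h * t + (t * s) * inner ℝ n (y - q) := by
    rw [h3, h1]; ring
  have hts : 0 < t * s := by positivity
  have hWpos : 0 < |inner ℝ w (y - q)| := abs_pos.2 hw
  rw [hWW, hZZ, abs_mul, abs_of_pos hts, div_le_div_iff₀ (by linarith) (by nlinarith)] at hle
  have : 0 < |inner ℝ w (y - q)| * (2 * h + 2 * h * t) := by positivity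
  nlinarith

lemma frame (g n : Euc 3) (hg : inner ℝ g g = 1) (hn : inner ℝ n n = 1)
    (hgn : inner ℝ g n = 0) : ∃ w : Euc 3, inner ℝ w g = 0 ∧ inner ℝ w n = 0 ∧
      ∀ u : Euc 3, u = inner ℝ g u • g + inner ℝ w u • w + inner ℝ n u • n := by
  have hlt : Module.finrank ℝ (Submodule.span ℝ {g, n}) ≤ 2 := by
    have := finrank_span_finset_le_card (R := ℝ) ({g, n} : Finset (Euc 3))
    simp only [Finset.coe_insert, Finset.coe_singleton] at this
    exact this.trans Finset.card_le_two
  have hsum := Submodule.finrank_add_finrank_orthogonal (Submodule.span ℝ {g, n})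
  have h3 : Module.finrank ℝ (Euc 3) = 3 := by simp
  have hnt : (Submodule.span ℝ {g, n})ᗮ ≠ ⊥ := by
    intro h; rw [h, finrank_bot] at hsum; omega
  obtain ⟨v, hv, hv0⟩ := Submodule.exists_mem_ne_zero_of_ne_bot hnt
  rw [Submodule.mem_orthogonal'] at hv
  have hvg := hv g (Submodule.subset_span (by simp))
  have hvn := hv n (Submodule.subset_span (by simp))
  have hvpos : 0 < ‖v‖ := norm_pos_iff.2 hv0
  let w := ‖v‖⁻¹ • v
  have hwg : inner ℝ w g = 0 := by simp [w, inner_smul_left, hvg]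
  have hwn : inner ℝ w n = 0 := by simp [w, inner_smul_left, hvn]
  have hw1 : ‖w‖ = 1 := by
    simp only [w, norm_smul, norm_inv, norm_norm]; exact inv_mul_cancel₀ hvpos.ne'
  have hg1 : ‖g‖ = 1 := by
    rw [real_inner_self_eq_norm_sq] at hg
    nlinarith [norm_nonneg g]
  have hn1 : ‖n‖ = 1 := by
    rw [real_inner_self_eq_norm_sq] at hn
    nlinarith [norm_nonneg n]
  have hon : Orthonormal ℝ ![g, w, n] := by
    refine ⟨fun i => by fin_cases i <;> simp [hg1, hw1, hn1], ?_⟩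
    intro i j hij
    have a1 : inner ℝ g w = 0 := by rw [real_inner_comm]; exact hwg
    have a2 : inner ℝ n g = 0 := by rw [real_inner_comm]; exact hgn
    have a3 : inner ℝ n w = 0 := by rw [real_inner_comm]; exact hwn
    fin_cases i <;> fin_cases j <;> simp_all
  let B := basisOfOrthonormalOfCardEqFinrank hon (by simp)
  have hB : ⇑B = ![g, w, n] := coe_basisOfOrthonormalOfCardEqFinrank hon (by simp)
  let O := B.toOrthonormalBasis (by rw [hB]; exact hon)
  have hO : ⇑O = ![g, w, n] := by rw [← hB]; exact B.coe_toOrthonormalBasis _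
  refine ⟨w, hwg, hwn, fun u => ?_⟩
  have := O.sum_repr' u
  rw [Fin.sum_univ_three, hO] at this
  simpa using this.symm

/-- For a body symmetric across `H`, with both `p ∉ H` and its mirror
image having all plane sections with lines of symmetry parallel to `H`, and no
boundary segment parallel to `H`, every shadow boundary in a direction `Γ ⊂ H`
lies in a plane orthogonal to `Γ`. -/
theorem stmt17 (K : Set (Euc 3)) (hK : IsConvexBody K)
    (H : AffineSubspace ℝ (Euc 3)) (hH : IsHyperplane H)
    (S : Euc 3 → Euc 3) (hS : IsReflectionFix S H) (hSK : S '' K = K)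
    (p : Euc 3) (hp : p ∈ interior K) (hpH : p ∉ H)
    (hsecp : ∀ P : AffineSubspace ℝ (Euc 3), IsHyperplane P → p ∈ P →
      ∃ L : AffineSubspace ℝ (Euc 3), Module.finrank ℝ L.direction = 1 ∧
        L.direction ≤ H.direction ∧ IsSectionSymmPlane K P L)
    (hsecq : ∀ P : AffineSubspace ℝ (Euc 3), IsHyperplane P → S p ∈ P →
      ∃ L : AffineSubspace ℝ (Euc 3), Module.finrank ℝ L.direction = 1 ∧
        L.direction ≤ H.direction ∧ IsSectionSymmPlane K P L)
    (hnoseg : ¬ ∃ x y : Euc 3, x ≠ y ∧ y - x ∈ H.direction ∧ segment ℝ x y ⊆ frontier K) :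
    ∀ Γ : AffineSubspace ℝ (Euc 3), (Γ : Set (Euc 3)) ⊆ (H : Set (Euc 3)) →
      Module.finrank ℝ Γ.direction = 1 →
      ∃ Δ : AffineSubspace ℝ (Euc 3), Module.finrank ℝ Δ.direction = 2 ∧
        Δ.direction = Γ.directionᗮ ∧
        shadowBoundary K Γ.direction ⊆ (Δ : Set (Euc 3)) := by
  intro Γ hΓ hΓ1
  obtain ⟨hKc, hKx, -⟩ := hK
  obtain ⟨⟨hpt, hpt'⟩, hH2⟩ := hH
  -- unit vector g
  obtain ⟨g, hgΓ, hg, hspan⟩ : ∃ g ∈ Γ.direction, inner ℝ g g = (1 : ℝ) ∧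
      ∀ u ∈ Γ.direction, ∃ a : ℝ, u = a • g := by
    have hnt : Γ.direction ≠ ⊥ := by
      intro h; rw [h] at hΓ1; simp at hΓ1
    obtain ⟨v, hv, hv0⟩ := Submodule.exists_mem_ne_zero_of_ne_bot hnt
    have hvpos : 0 < ‖v‖ := norm_pos_iff.2 hv0
    refine ⟨‖v‖⁻¹ • v, Γ.direction.smul_mem _ hv, ?_, ?_⟩
    · rw [real_inner_self_eq_norm_sq]
      simp only [norm_smul, norm_inv, norm_norm]
      rw [inv_mul_cancel₀ hvpos.ne']; norm_num
    · intro u hu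
      have hv' : (⟨v, hv⟩ : Γ.direction) ≠ 0 := by simpa using hv0
      obtain ⟨a, ha⟩ := exists_smul_eq_of_finrank_eq_one hΓ1 hv' ⟨u, hu⟩
      have ha' : a • v = u := congrArg Subtype.val ha
      refine ⟨a * ‖v‖, ?_⟩
      rw [smul_smul, mul_assoc, mul_inv_cancel₀ hvpos.ne', mul_one, ha']
  have hgV : g ∈ H.direction := AffineSubspace.direction_le hΓ hgΓ
  -- unit normal n, with positive height of p
  obtain ⟨h0, h, n, hh0, hh, hn, hnV, hpn⟩ : ∃ (h0 : Euc 3) (h : ℝ) (n : Euc 3), h0 ∈ H ∧ 0 < h ∧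
      inner ℝ n n = (1 : ℝ) ∧ (∀ u ∈ H.direction, inner ℝ n u = (0 : ℝ)) ∧ p - h0 = h • n := by
    let a := H.direction.starProjection (p - hpt)
    let v := (p - hpt) - a
    have ha : a ∈ H.direction := Submodule.starProjection_apply_mem _ _
    have hv : v ∈ H.directionᗮ := Submodule.sub_starProjection_mem_orthogonal _
    have hv0 : v ≠ 0 := by
      intro h
      apply hpH
      have : p = a +ᵥ hpt := by
        have : p - hpt = a := sub_eq_zero.1 h
        rw [← this]; simp
      rw [this]
      exact AffineSubspace.vadd_mem_of_mem_direction ha hpt'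
    have hvpos : 0 < ‖v‖ := norm_pos_iff.2 hv0
    refine ⟨a +ᵥ hpt, ‖v‖, ‖v‖⁻¹ • v, AffineSubspace.vadd_mem_of_mem_direction ha hpt', hvpos,
      ?_, ?_, ?_⟩
    · rw [real_inner_self_eq_norm_sq]
      simp only [norm_smul, norm_inv, norm_norm]
      rw [inv_mul_cancel₀ hvpos.ne']; norm_num
    · intro u hu
      rw [inner_smul_left, (Submodule.mem_orthogonal' _ _).1 hv u hu]; simp
    · rw [smul_smul, mul_inv_cancel₀ hvpos.ne', one_smul]
      simp only [v, vadd_eq_add]; abel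
  have hng : inner ℝ n g = 0 := hnV g hgV
  have hgn : inner ℝ g n = 0 := by rw [real_inner_comm]; exact hng
  obtain ⟨w, hwg, hwn, hrep⟩ := frame g n hg hn hgn
  have hVn : ∀ u, inner ℝ n u = (0 : ℝ) ↔ u ∈ H.direction := by
    intro u
    have hn0 : n ≠ 0 := by rintro rfl; simp at hn
    have hle : H.direction ≤ (ℝ ∙ n)ᗮ := by
      intro u hu
      rw [Submodule.mem_orthogonal_singleton_iff_inner_right]
      exact hnV u hu
    have heq : H.direction = (ℝ ∙ n)ᗮ := by
      apply Submodule.eq_of_le_of_finrank_eq hle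
      have hsum := Submodule.finrank_add_finrank_orthogonal (ℝ ∙ n)
      rw [finrank_span_singleton hn0] at hsum
      have h3 : Module.finrank ℝ (Euc 3) = 3 := by simp
      omega
    rw [heq, Submodule.mem_orthogonal_singleton_iff_inner_right]
  have hwV : w ∈ H.direction := (hVn w).1 (by rw [real_inner_comm]; exact hwn)
  -- the mirror point
  have hSp : S p - h0 = -(h • n) := by
    obtain ⟨hiso, -, hfix⟩ := hS
    have hfixH : ∀ y ∈ H, S y = y := by
      intro y hy
      have : y ∈ {x | S x = x} := by rw [hfix]; exact hy
      exact this
    have hd : ∀ u ∈ H.direction, ‖S p - h0 - u‖ ^ 2 = ‖h • n - u‖ ^ 2 := by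
      intro u hu
      have hy : u +ᵥ h0 ∈ H := AffineSubspace.vadd_mem_of_mem_direction hu hh0
      have := hiso.dist_eq p (u +ᵥ h0)
      rw [hfixH _ hy, dist_eq_norm, dist_eq_norm] at this
      have e1 : S p - h0 - u = S p - (u +ᵥ h0) := by rw [vadd_eq_add]; abel
      have e2 : h • n - u = p - (u +ᵥ h0) := by rw [← hpn, vadd_eq_add]; abel
      rw [e1, e2, this]
    have horth : ∀ u ∈ H.direction, inner ℝ (S p - h0) u = (0 : ℝ) := by
      intro u hu
      have k0 := hd 0 (Submodule.zero_mem _)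
      have k1 := hd u hu
      rw [sub_zero, sub_zero] at k0
      rw [norm_sub_sq_real (S p - h0) u, norm_sub_sq_real (h • n) u, inner_smul_left, hnV u hu, k0] at k1
      simp at k1
      linarith
    have hr := hrep (S p - h0)
    rw [real_inner_comm, horth g hgV, real_inner_comm, horth w hwV] at hr
    simp only [zero_smul, zero_add] at hr
    have k0 := hd 0 (Submodule.zero_mem _)
    rw [sub_zero, sub_zero] at k0
    obtain ⟨c, hc⟩ : ∃ c : ℝ, c = inner ℝ n (S p - h0) := ⟨_, rfl⟩
    rw [← hc] at hr
    rw [hr, ← real_inner_self_eq_norm_sq, ← real_inner_self_eq_norm_sq] at k0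
    simp only [inner_smul_left, inner_smul_right, hn] at k0
    simp at k0
    rcases mul_self_eq_mul_self_iff.1 k0 with hk | hk
    · exfalso
      apply hpH
      have : S p = p := by
        have : S p - h0 = p - h0 := by rw [hr, hpn, hk]
        exact sub_left_injective this
      have h5 : p ∈ {x | S x = x} := this
      rw [hfix] at h5
      exact h5
    · rw [hr, hk, neg_smul]
  obtain ⟨q, hq⟩ : ∃ q, q = S p := ⟨_, rfl⟩
  rw [← hq] at hsecq hSp
  have hpq : p - q = (2 * h) • n := by
    have : p - q = (p - h0) - (q - h0) := by abel
    rw [this, hpn, hSp]; module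
  have hqK : q ∈ interior K := by
    obtain ⟨hiso, hinv, -⟩ := hS
    have hSS : ∀ x, S (S x) = x := fun x => congrFun hinv x
    have hpre : S ⁻¹' K = K := by
      ext x
      constructor
      · intro hx
        rw [← hSK]; exact ⟨S x, hx, hSS x⟩
      · intro hx
        have : S x ∈ S '' K := ⟨x, hx, rfl⟩
        rw [hSK] at this; exact this
    have hsub : S ⁻¹' interior K ⊆ interior K := by
      apply interior_maximal
      · intro x hx
        rw [← hpre]; exact interior_subset (s := K) hx
      · exact isOpen_interior.preimage hiso.continuous
    apply hsub
    rw [hq]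
    change S (S p) ∈ interior K
    rw [hSS]; exact hp
  have hnpq : inner ℝ n (p - q) = 2 * h := by rw [hpq, inner_smul_right, hn, mul_one]
  have hwpq : inner ℝ w (p - q) = 0 := by rw [hpq, inner_smul_right, hwn, mul_zero]
  -- level sets of the shadow boundary meet the axis
  have hlevel : ∀ x ∈ SBset K g, ∃ y ∈ SBset K g, inner ℝ g y = inner ℝ g x ∧
      h ≤ inner ℝ n (y - q) ∧ inner ℝ w (y - q) = 0 := by
    intro x hx
    have hEc : IsCompact (SBset K g ∩ {y | inner ℝ g y = inner ℝ g x}) := by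
      apply (sb_compact hKc g).inter_right
      exact isClosed_eq (by fun_prop) continuous_const
    obtain ⟨y, hy, h1, h2⟩ := dyn _ hEc ⟨x, hx, rfl⟩ p q g w n h hh hwg hng hnpq hwpq
      (by
        rintro z ⟨hz, hz'⟩ hnz
        obtain ⟨x', hx', e, r⟩ := stepA hKx H.direction p hp hsecp g hg hgV z hz
          (fun hm => hnz ((hVn _).2 hm))
        exact ⟨x', ⟨hx', e.trans hz'⟩, r⟩)
      (by
        rintro z ⟨hz, hz'⟩ hnz
        obtain ⟨x', hx', e, r⟩ := stepA hKx H.direction q hqK hsecq g hg hgV z hz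
          (fun hm => hnz ((hVn _).2 hm))
        exact ⟨x', ⟨hx', e.trans hz'⟩, r⟩)
    exact ⟨y, hy.1, hy.2, h1, h2⟩
  have hax : ∀ y ∈ SBset K g, ∀ z ∈ SBset K g, h ≤ inner ℝ n (y - q) → h ≤ inner ℝ n (z - q) →
      inner ℝ w (y - q) = 0 → inner ℝ w (z - q) = 0 → inner ℝ n (z - q) ≤ inner ℝ n (y - q) := by
    intro y hy z hz hyh hzh hyw hzw
    by_contra hlt
    push Not at hlt
    have ey := hrep (y - q)
    have ez := hrep (z - q)
    rw [hyw] at ey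
    rw [hzw] at ez
    generalize inner ℝ n (y - q) = A at *
    generalize inner ℝ n (z - q) = B at *
    generalize inner ℝ g (y - q) = C at *
    generalize inner ℝ g (z - q) = D at *
    have hB : 0 < B := by linarith
    have := combo_int hKx hqK hz.1 (t := A / B) (div_nonneg (by linarith) hB.le)
      ((div_lt_one hB).2 hlt)
    apply hy.2 (A / B * D - C)
    convert this using 1
    have ey' : y = q + (y - q) := by abel
    rw [ey', ey, ez]
    have hAB : A / B * B = A := by field_simp
    rw [smul_add, smul_smul (A / B) B n, hAB]
    module
  have huniq : ∀ y ∈ SBset K g, ∀ z ∈ SBset K g, h ≤ inner ℝ n (y - q) → h ≤ inner ℝ n (z - q) →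
      inner ℝ w (y - q) = 0 → inner ℝ w (z - q) = 0 → y = z := by
    intro y hy z hz hyh hzh hyw hzw
    have hZ := le_antisymm (hax z hz y hy hzh hyh hzw hyw) (hax y hy z hz hyh hzh hyw hzw)
    have hzy : ∃ r : ℝ, z - y = r • g := by
      refine ⟨inner ℝ g (z - q) - inner ℝ g (y - q), ?_⟩
      have e : z - y = (z - q) - (y - q) := by abel
      have ey := hrep (y - q)
      have ez := hrep (z - q)
      rw [hyw] at ey
      rw [hzw, ← hZ] at ez
      rw [e]
      generalize inner ℝ n (y - q) = A at *
      generalize inner ℝ g (y - q) = C at *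
      generalize inner ℝ g (z - q) = D at *
      rw [ey, ez]
      module
    obtain ⟨r, hr⟩ := hzy
    by_contra hne
    apply hnoseg
    refine ⟨y, z, hne, ?_, ?_⟩
    · rw [hr]; exact H.direction.smul_mem _ hgV
    · intro x hx
      have hxK : x ∈ K := hKx.segment_subset hy.1 hz.1 hx
      rw [segment_eq_image'] at hx
      obtain ⟨t, -, rfl⟩ := hx
      refine ⟨subset_closure hxK, ?_⟩
      simp only
      rw [hr, smul_smul]
      exact hy.2 _
  have hconst : ∀ x ∈ SBset K g, ∀ z ∈ SBset K g, (inner ℝ g x : ℝ) = inner ℝ g z := by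
    intro x hx z hz
    obtain ⟨y1, h1, e1, a1, b1⟩ := hlevel x hx
    obtain ⟨y2, h2, e2, a2, b2⟩ := hlevel z hz
    rw [← e1, ← e2, huniq y1 h1 y2 h2 a1 a2 b1 b2]
  have hsub : shadowBoundary K Γ.direction ⊆ SBset K g := by
    intro x hx
    simp only [shadowBoundary, mem_iUnion, mem_ofPred_eq] at hx
    obtain ⟨l, ⟨hl, -, hli⟩, hxl, hxK⟩ := hx
    refine ⟨hxK, fun t ht => ?_⟩
    have : x + t • g ∈ (l : Set (Euc 3)) ∩ interior K := by
      refine ⟨?_, ht⟩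
      have := AffineSubspace.vadd_mem_of_mem_direction
        (show t • g ∈ l.direction by rw [hl]; exact Γ.direction.smul_mem _ hgΓ) hxl
      rw [add_comm]; exact this
    rw [hli] at this
    exact this
  have hfr : Module.finrank ℝ Γ.directionᗮ = 2 := by
    have hsum := Submodule.finrank_add_finrank_orthogonal Γ.direction
    have h3 : Module.finrank ℝ (Euc 3) = 3 := by simp
    omega
  by_cases hne : ∃ x0, x0 ∈ SBset K g
  · obtain ⟨x0, hx0⟩ := hne
    refine ⟨AffineSubspace.mk' x0 Γ.directionᗮ, ?_, AffineSubspace.direction_mk' _ _, ?_⟩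
    · rw [AffineSubspace.direction_mk']; exact hfr
    · intro x hx
      rw [SetLike.mem_coe, AffineSubspace.mem_mk', vsub_eq_sub, Submodule.mem_orthogonal]
      intro u hu
      obtain ⟨a, rfl⟩ := hspan u hu
      rw [inner_smul_left, inner_sub_right, hconst x (hsub hx) x0 hx0]
      simp
  · refine ⟨AffineSubspace.mk' 0 Γ.directionᗮ, ?_, AffineSubspace.direction_mk' _ _, ?_⟩
    · rw [AffineSubspace.direction_mk']; exact hfr
    · intro x hx
      exact absurd ⟨x, hsub hx⟩ hne
end
end
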